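/- Mackey theorem: let μ, ν be compositions of n and M an H_ν-module. Then res^n_μ ind^n_ν M admits a filtration by H_μ-submodules whose successive quotients are evenly isomorphic to ind^μ_{μ∩xν} (^x(res^ν_{x^{−1}μ∩ν} M)), one for each x ∈ D_{μ,ν}. The subquotients can be taken in any order refining the Bruhat order on D_{μ,ν}; in particular ind^μ_{μ∩ν} res^ν_{μ∩ν} M appears as a submodule. -/

import Mathlib

set_option maxHeartbeats 1000000

namespace HC

/-- Generators of the affine Hecke–Clifford superalgebra `H_n`. -/
inductive Gen (n : ℕ) : Type
  | X : Fin n → Gen n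
  | Xinv : Fin n → Gen n
  | C : Fin n → Gen n
  | T : Fin (n - 1) → Gen n

/-- The node `i` of `Fin n`, for `i : Fin (n-1)` (1-based: the node `i`). -/
def lo {n : ℕ} (i : Fin (n - 1)) : Fin n :=
  ⟨i.val, by have := i.isLt; omega⟩

/-- The node `i+1` of `Fin n`, for `i : Fin (n-1)`. -/
def hi {n : ℕ} (i : Fin (n - 1)) : Fin n :=
  ⟨i.val + 1, by have := i.isLt; omega⟩

variable (F : Type) [Field F]

/-- The free algebra on the generators. -/
abbrev FA (n : ℕ) : Type := FreeAlgebra F (Gen n)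

noncomputable def fx {n : ℕ} (i : Fin n) : FA F n := FreeAlgebra.ι F (Gen.X i)
noncomputable def fxinv {n : ℕ} (i : Fin n) : FA F n := FreeAlgebra.ι F (Gen.Xinv i)
noncomputable def fc {n : ℕ} (i : Fin n) : FA F n := FreeAlgebra.ι F (Gen.C i)
noncomputable def ft {n : ℕ} (i : Fin (n - 1)) : FA F n := FreeAlgebra.ι F (Gen.T i)

/-- The defining relations of the affine Hecke–Clifford superalgebra, with parameter
`q` and `ξ = q - q⁻¹`. -/
inductive Rel (q : F) (n : ℕ) : FA F n → FA F n → Prop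
  | XXinv (i : Fin n) : Rel q n (fx F i * fxinv F i) 1
  | XinvX (i : Fin n) : Rel q n (fxinv F i * fx F i) 1
  | XX (i j : Fin n) : Rel q n (fx F i * fx F j) (fx F j * fx F i)
  | XiXi (i j : Fin n) : Rel q n (fxinv F i * fxinv F j) (fxinv F j * fxinv F i)
  | XXi (i j : Fin n) (h : i ≠ j) : Rel q n (fx F i * fxinv F j) (fxinv F j * fx F i)
  | CC (i : Fin n) : Rel q n (fc F i * fc F i) 1
  | Canti (i j : Fin n) (h : i ≠ j) : Rel q n (fc F i * fc F j) (-(fc F j * fc F i))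
  | CX (i : Fin n) : Rel q n (fc F i * fx F i) (fxinv F i * fc F i)
  | CXi (i : Fin n) : Rel q n (fc F i * fxinv F i) (fx F i * fc F i)
  | CXo (i j : Fin n) (h : i ≠ j) : Rel q n (fc F i * fx F j) (fx F j * fc F i)
  | CXio (i j : Fin n) (h : i ≠ j) : Rel q n (fc F i * fxinv F j) (fxinv F j * fc F i)
  | Tquad (i : Fin (n - 1)) : Rel q n (ft F i * ft F i) ((q - q⁻¹) • ft F i + 1)
  | Tbraid (i j : Fin (n - 1)) (h : (j : ℕ) = (i : ℕ) + 1) :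
      Rel q n (ft F i * ft F j * ft F i) (ft F j * ft F i * ft F j)
  | TTfar (i j : Fin (n - 1)) (h : (i : ℕ) + 1 < (j : ℕ)) :
      Rel q n (ft F i * ft F j) (ft F j * ft F i)
  | TC (i : Fin (n - 1)) : Rel q n (ft F i * fc F (lo i)) (fc F (hi i) * ft F i)
  | TCo (i : Fin (n - 1)) (j : Fin n) (h1 : j ≠ lo i) (h2 : j ≠ hi i) :
      Rel q n (ft F i * fc F j) (fc F j * ft F i)
  | TXo (i : Fin (n - 1)) (j : Fin n) (h1 : j ≠ lo i) (h2 : j ≠ hi i) :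
      Rel q n (ft F i * fx F j) (fx F j * ft F i)
  | TXio (i : Fin (n - 1)) (j : Fin n) (h1 : j ≠ lo i) (h2 : j ≠ hi i) :
      Rel q n (ft F i * fxinv F j) (fxinv F j * ft F i)
  | cross (i : Fin (n - 1)) :
      Rel q n ((ft F i + (q - q⁻¹) • (fc F (lo i) * fc F (hi i))) * fx F (lo i) * ft F i)
        (fx F (hi i))

/-- The affine Hecke–Clifford superalgebra `H_n` over `F` with parameter `q`. -/
abbrev H (q : F) (n : ℕ) : Type := RingQuot (Rel F q n)

noncomputable def X (q : F) {n : ℕ} (i : Fin n) : H F q n :=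
  RingQuot.mkAlgHom F (Rel F q n) (fx F i)

noncomputable def Xinv (q : F) {n : ℕ} (i : Fin n) : H F q n :=
  RingQuot.mkAlgHom F (Rel F q n) (fxinv F i)

noncomputable def C (q : F) {n : ℕ} (i : Fin n) : H F q n :=
  RingQuot.mkAlgHom F (Rel F q n) (fc F i)

noncomputable def T (q : F) {n : ℕ} (i : Fin (n - 1)) : H F q n :=
  RingQuot.mkAlgHom F (Rel F q n) (ft F i)

/-- `q` is either a primitive root of unity of odd order (including `q = 1`)
or not a root of unity at all (and `q ≠ 0`). -/
def GoodParam (q : F) : Prop :=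
  q ≠ 0 ∧ ((∃ m : ℕ, Odd m ∧ IsPrimitiveRoot q m) ∨ ∀ m : ℕ, 0 < m → q ^ m ≠ 1)

/-- `X_i^a` for an integer exponent `a ∈ ℤ`. -/
noncomputable def XZ (q : F) {n : ℕ} (i : Fin n) (a : ℤ) : H F q n :=
  if 0 ≤ a then X F q i ^ a.toNat else Xinv F q i ^ (-a).toNat

/-- The monomial `X^α = X_1^{α_1} ⋯ X_n^{α_n}` for `α ∈ ℤ^n`. -/
noncomputable def Xmon (q : F) {n : ℕ} (α : Fin n → ℤ) : H F q n :=
  ((List.finRange n).map fun i => XZ F q i (α i)).prod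

/-- The monomial `C^β = C_1^{β_1} ⋯ C_n^{β_n}` for `β ∈ {0,1}^n`. -/
noncomputable def Cmon (q : F) {n : ℕ} (β : Fin n → Bool) : H F q n :=
  ((List.finRange n).map fun i => if β i then C F q i else 1).prod

/-- The basic transposition `s_i = (i, i+1)` of `S_n`. -/
def s {n : ℕ} (i : Fin (n - 1)) : Equiv.Perm (Fin n) := Equiv.swap (lo i) (hi i)

/-- The Coxeter length (number of inversions) of a permutation of `Fin n`. -/
def len {n : ℕ} (w : Equiv.Perm (Fin n)) : ℕ :=
  ((Finset.univ : Finset (Fin n × Fin n)).filter fun p => p.1 < p.2 ∧ w p.2 < w p.1).card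

/-- `Tw` is the family of standard basis elements `T_w`, `w ∈ S_n`: it satisfies
`T_1 = 1`, `T_{s_i} = T_i`, and `T_{s_i w} = T_i T_w` whenever `ℓ(s_i w) = ℓ(w) + 1`.
These conditions determine the family uniquely. -/
def IsTFam (q : F) {n : ℕ} (Tw : Equiv.Perm (Fin n) → H F q n) : Prop :=
  Tw 1 = 1 ∧ (∀ i : Fin (n - 1), Tw (s i) = T F q i) ∧
    ∀ (i : Fin (n - 1)) (w : Equiv.Perm (Fin n)),
      len (s i * w) = len w + 1 → Tw (s i * w) = T F q i * Tw w

/-- `h` is the quantum characteristic of `q`:  the smallest positive integer with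
`q^{1-h} + q^{3-h} + ⋯ + q^{h-1} = 0`. -/
def qcharEq (q : F) (h : ℕ) : Prop :=
  0 < h ∧ (∑ k ∈ Finset.range h, q ^ (1 - (h : ℤ) + 2 * (k : ℤ))) = 0 ∧
    ∀ h' : ℕ, 0 < h' → h' < h →
      (∑ k ∈ Finset.range h', q ^ (1 - (h' : ℤ) + 2 * (k : ℤ))) ≠ 0

/-- `i ∈ I = {0, 1, …, ℓ}` where `ℓ = (h-1)/2` (no condition if the quantum
characteristic is infinite). -/
def memI (q : F) (i : ℕ) : Prop := ∀ h : ℕ, qcharEq F q h → 2 * i + 1 ≤ h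

/-- `q(i) = 2(q^{2i+1} + q^{-2i-1})/(q + q⁻¹)`. -/
noncomputable def qres (q : F) (i : ℕ) : F :=
  2 * (q ^ (2 * i + 1) + q⁻¹ ^ (2 * i + 1)) / (q + q⁻¹)

/-- Index of the block containing position `k` (0-based), for a composition given as a
list of parts. -/
def blk : List ℕ → ℕ → ℕ
  | [], _ => 0
  | a :: rest, k => if k < a then 0 else blk rest (k - a) + 1

/-- Membership in the Young subgroup `S_μ ⊆ S_n`. -/
def InYoung {n : ℕ} (μ : List ℕ) (w : Equiv.Perm (Fin n)) : Prop :=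
  ∀ k : Fin n, blk μ (w k).val = blk μ k.val

/-- `μ` is a composition of `n`. -/
def IsComposition (μ : List ℕ) (n : ℕ) : Prop := (∀ a ∈ μ, 0 < a) ∧ μ.sum = n

/-- The parabolic subalgebra generated by all `X_i^{±1}`, `C_i`, and the `T_j` with
`j` in a set `J` of admissible indices. -/
def parabolicJ (q : F) {n : ℕ} (J : Set (Fin (n - 1))) : Subalgebra F (H F q n) :=
  Algebra.adjoin F
    ((Set.range fun i : Fin n => X F q i) ∪ (Set.range fun i : Fin n => Xinv F q i) ∪
      (Set.range fun i : Fin n => C F q i) ∪ {h | ∃ j ∈ J, h = T F q j})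

/-- The parabolic subalgebra `H_μ` for a composition `μ`. -/
def parabolicC (q : F) {n : ℕ} (μ : List ℕ) : Subalgebra F (H F q n) :=
  parabolicJ F q {j | InYoung μ (s j)}

/-- The classical parabolic subalgebra `H^cl_μ`, generated by the `T_j` with `s_j ∈ S_μ`. -/
def clparC (q : F) {n : ℕ} (μ : List ℕ) : Subalgebra F (H F q n) :=
  Algebra.adjoin F {h | ∃ j : Fin (n - 1), InYoung μ (s j) ∧ h = T F q j}

/-- The finite Hecke–Clifford subalgebra `H^fn_n`, generated by all `C_i` and `T_j`. -/
def Hfin (q : F) (n : ℕ) : Subalgebra F (H F q n) :=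
  Algebra.adjoin F
    ((Set.range fun i : Fin n => C F q i) ∪ {h | ∃ j : Fin (n - 1), h = T F q j})

/-- `x` is a minimal length `(S_μ, S_ν)`-double coset representative. -/
def IsMinDC {n : ℕ} (μ ν : List ℕ) (x : Equiv.Perm (Fin n)) : Prop :=
  ∀ u v : Equiv.Perm (Fin n), InYoung μ u → InYoung ν v → len x ≤ len (u * x * v)

/-- `w ∈ S_μ x S_ν`. -/
def InDC {n : ℕ} (μ ν : List ℕ) (x w : Equiv.Perm (Fin n)) : Prop :=
  ∃ u v : Equiv.Perm (Fin n), InYoung μ u ∧ InYoung ν v ∧ w = u * x * v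

/-- A covering step in the Bruhat order: multiplication by a reflection increasing length. -/
def BruhatStep {n : ℕ} (v w : Equiv.Perm (Fin n)) : Prop :=
  ∃ a b : Fin n, a ≠ b ∧ w = Equiv.swap a b * v ∧ len v < len w

/-- The Bruhat order on `S_n`. -/
def BruhatLE {n : ℕ} : Equiv.Perm (Fin n) → Equiv.Perm (Fin n) → Prop :=
  Relation.ReflTransGen BruhatStep

/-- The space of `A`-equivariant linear maps between two representations of the
`F`-algebra `A`. -/
def eqvHoms {A : Type} [Ring A] [Algebra F A] {M N : Type}
    [AddCommGroup M] [Module F M] [AddCommGroup N] [Module F N]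
    (ρM : A →ₐ[F] Module.End F M) (ρN : A →ₐ[F] Module.End F N) :
    Submodule F (M →ₗ[F] N) where
  carrier := {f | ∀ (x : A) (m : M), f (ρM x m) = ρN x (f m)}
  add_mem' := by
    intro f g hf hg x m
    simp only [LinearMap.add_apply, hf x m, hg x m, map_add]
  zero_mem' := by
    intro x m
    simp only [LinearMap.zero_apply, map_zero]
  smul_mem' := by
    intro c f hf x m
    simp only [LinearMap.smul_apply, hf x m, map_smul]

/-- `(E, ρE, ι)` is the module induced along the algebra morphism `φ : B →ₐ A` from
the `B`-representation `(M, ρ)`, i.e. `E = A ⊗_B M`, characterized by its universal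
property. -/
def IsInducedAlong {A B : Type} [Ring A] [Ring B] [Algebra F A] [Algebra F B]
    (φ : B →ₐ[F] A) {M : Type} [AddCommGroup M] [Module F M]
    (ρ : B →ₐ[F] Module.End F M) {E : Type} [AddCommGroup E] [Module F E]
    (ρE : A →ₐ[F] Module.End F E) (ι : M →ₗ[F] E) : Prop :=
  (∀ (b : B) (m : M), ι (ρ b m) = ρE (φ b) (ι m)) ∧
    ∀ (P : Type) [AddCommGroup P] [Module F P],
      ∀ (ρP : A →ₐ[F] Module.End F P) (f : M →ₗ[F] P),
        (∀ (b : B) (m : M), f (ρ b m) = ρP (φ b) (f m)) →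
        ∃! g : E →ₗ[F] P,
          (∀ (x : A) (e : E), g (ρE x e) = ρP x (g e)) ∧ ∀ m : M, g (ι m) = f m

/-- `δ` is the grading automorphism of the superalgebra `H_n`
(identity on even generators, `-1` on the odd generators `C_i`). -/
def IsGradingAut (q : F) {n : ℕ} (δ : H F q n →ₐ[F] H F q n) : Prop :=
  (∀ i : Fin n, δ (X F q i) = X F q i) ∧ (∀ i : Fin n, δ (Xinv F q i) = Xinv F q i) ∧
    (∀ i : Fin n, δ (C F q i) = -C F q i) ∧ ∀ i : Fin (n - 1), δ (T F q i) = T F q i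

/-- `τ` is the antiautomorphism of `H_n` with `τ(T_i) = T_i + ξ C_i C_{i+1}`,
`τ(C_j) = C_j`, `τ(X_j) = X_j`. -/
def IsTauAntiAut (q : F) {n : ℕ} (τ : H F q n →ₗ[F] H F q n) : Prop :=
  Function.Bijective τ ∧ (∀ a b : H F q n, τ (a * b) = τ b * τ a) ∧ τ 1 = 1 ∧
    (∀ i : Fin (n - 1),
      τ (T F q i) = T F q i + (q - q⁻¹) • (C F q (lo i) * C F q (hi i))) ∧
    (∀ j : Fin n, τ (C F q j) = C F q j) ∧ (∀ j : Fin n, τ (X F q j) = X F q j) ∧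
    ∀ j : Fin n, τ (Xinv F q j) = Xinv F q j

/-- `ρ'` is the representation of the subalgebra `B` obtained from the
`H_ν`-representation `ρν` by twisting with the isomorphism `φ_{x⁻¹}`
(determined by `X_i ↦ X_{x⁻¹ i}`, `C_i ↦ C_{x⁻¹ i}`, `T_w ↦ T_{x⁻¹ w x}`). -/
def IsTwistedRep (q : F) {n : ℕ} (ν : List ℕ) (x : Equiv.Perm (Fin n))
    (B : Subalgebra F (H F q n)) {M : Type} [AddCommGroup M] [Module F M]
    (ρν : ↥(parabolicC F q (n := n) ν) →ₐ[F] Module.End F M)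
    (ρ' : ↥B →ₐ[F] Module.End F M) : Prop :=
  (∀ (i : Fin n) (a : ↥B) (b : ↥(parabolicC F q (n := n) ν)),
      (a : H F q n) = X F q i → (b : H F q n) = X F q (x⁻¹ i) → ρ' a = ρν b) ∧
  (∀ (i : Fin n) (a : ↥B) (b : ↥(parabolicC F q (n := n) ν)),
      (a : H F q n) = Xinv F q i → (b : H F q n) = Xinv F q (x⁻¹ i) → ρ' a = ρν b) ∧
  (∀ (i : Fin n) (a : ↥B) (b : ↥(parabolicC F q (n := n) ν)),
      (a : H F q n) = C F q i → (b : H F q n) = C F q (x⁻¹ i) → ρ' a = ρν b) ∧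
  ∀ (j j' : Fin (n - 1)) (a : ↥B) (b : ↥(parabolicC F q (n := n) ν)),
      lo j' = x⁻¹ (lo j) → (a : H F q n) = T F q j → (b : H F q n) = T F q j' → ρ' a = ρν b

/-- The element `f = a_d X_1^d + ⋯ + a_1 X_1 + a_0` of `H_n`. -/
noncomputable def felem (q : F) (n d : ℕ) (aa : ℕ → F) : H F q n :=
  if h : 0 < n then ∑ i ∈ Finset.range (d + 1), aa i • X F q (⟨0, h⟩ : Fin n) ^ i else 0

/-- The conditions on the coefficients of `f`: degree `d ≥ 1`, monic, and
`a_i = a_0 a_{d-i}`. -/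
def GoodPoly (d : ℕ) (aa : ℕ → F) : Prop :=
  1 ≤ d ∧ aa d = 1 ∧ (∀ i ≤ d, aa i = aa 0 * aa (d - i)) ∧ ∀ i : ℕ, d < i → aa i = 0

/-- The relation generating the two-sided ideal `I_f` of `H_n`. -/
inductive CycRel (q : F) (n d : ℕ) (aa : ℕ → F) : H F q n → H F q n → Prop
  | rel : CycRel q n d aa (felem F q n d aa) 0

/-- The cyclotomic Hecke–Clifford superalgebra `H_n^f = H_n / I_f`. -/
abbrev Hf (q : F) (n d : ℕ) (aa : ℕ → F) : Type := RingQuot (CycRel F q n d aa)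

/-- The canonical quotient map `H_n → H_n^f`. -/
noncomputable def cyc (q : F) (n d : ℕ) (aa : ℕ → F) : H F q n →ₐ[F] Hf F q n d aa :=
  RingQuot.mkAlgHom F (CycRel F q n d aa)

noncomputable def Xf (q : F) (n d : ℕ) (aa : ℕ → F) (i : Fin n) : Hf F q n d aa :=
  cyc F q n d aa (X F q i)
noncomputable def Xinvf (q : F) (n d : ℕ) (aa : ℕ → F) (i : Fin n) : Hf F q n d aa :=
  cyc F q n d aa (Xinv F q i)
noncomputable def Cf (q : F) (n d : ℕ) (aa : ℕ → F) (i : Fin n) : Hf F q n d aa :=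
  cyc F q n d aa (C F q i)
noncomputable def Tf (q : F) (n d : ℕ) (aa : ℕ → F) (i : Fin (n - 1)) : Hf F q n d aa :=
  cyc F q n d aa (T F q i)

/-- `e` is the canonical embedding `H_k^f → H_N^f` (shifting all indices by `sh`;
for `sh = 0` this is the standard identification of `H_k^f` with a subalgebra of
`H_N^f`). -/
def IsCycEmb (q : F) (k N d : ℕ) (aa : ℕ → F) (sh : ℕ)
    (e : Hf F q k d aa →ₐ[F] Hf F q N d aa) : Prop :=
  (∀ (i : Fin k) (i' : Fin N), (i' : ℕ) = sh + (i : ℕ) →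
      e (Xf F q k d aa i) = Xf F q N d aa i') ∧
  (∀ (i : Fin k) (i' : Fin N), (i' : ℕ) = sh + (i : ℕ) →
      e (Xinvf F q k d aa i) = Xinvf F q N d aa i') ∧
  (∀ (i : Fin k) (i' : Fin N), (i' : ℕ) = sh + (i : ℕ) →
      e (Cf F q k d aa i) = Cf F q N d aa i') ∧
  ∀ (j : Fin (k - 1)) (j' : Fin (N - 1)), (j' : ℕ) = sh + (j : ℕ) →
      e (Tf F q k d aa j) = Tf F q N d aa j'

/-- `δ` is the grading automorphism of the superalgebra `H_n^f`. -/
def IsCycGrading (q : F) (n d : ℕ) (aa : ℕ → F)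
    (δ : Hf F q n d aa →ₐ[F] Hf F q n d aa) : Prop :=
  (∀ i : Fin n, δ (Xf F q n d aa i) = Xf F q n d aa i) ∧
  (∀ i : Fin n, δ (Xinvf F q n d aa i) = Xinvf F q n d aa i) ∧
  (∀ i : Fin n, δ (Cf F q n d aa i) = -Cf F q n d aa i) ∧
  ∀ j : Fin (n - 1), δ (Tf F q n d aa j) = Tf F q n d aa j

/-- The elements `f_1 = f`, `f_{i+1} = (T_i + ξ C_i C_{i+1}) f_i T_i` of `H_n`
(0-based indexing: `fseq k = f_{k+1}`). -/
noncomputable def fseq (q : F) (n d : ℕ) (aa : ℕ → F) : ℕ → H F q n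
  | 0 => felem F q n d aa
  | k + 1 =>
    if h : k < n - 1 then
      (T F q (⟨k, h⟩ : Fin (n - 1)) +
          (q - q⁻¹) • (C F q (lo (⟨k, h⟩ : Fin (n - 1))) *
            C F q (hi (⟨k, h⟩ : Fin (n - 1))))) *
        fseq q n d aa k * T F q (⟨k, h⟩ : Fin (n - 1))
    else 0

/-- `f_Z = f_{z_1} ⋯ f_{z_u}` for `Z = {z_1 < ⋯ < z_u} ⊆ {1,…,n}` (0-based). -/
noncomputable def fZ (q : F) (n d : ℕ) (aa : ℕ → F) (Z : Finset (Fin n)) : H F q n :=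
  ((Z.sort (· ≤ ·)).map fun z => fseq F q n d aa (z : ℕ)).prod

/-- The set of indices `j` with `s_j ∈ S_μ ∩ x S_ν x⁻¹`, defining the parabolic
subalgebra `H_{μ ∩ xν}`. -/
def Jcap {n : ℕ} (μ ν : List ℕ) (x : Equiv.Perm (Fin n)) : Set (Fin (n - 1)) :=
  {j | InYoung μ (s j) ∧ InYoung ν (x⁻¹ * s j * x)}

theorem parabolicJ_mono (F : Type) [Field F] (q : F) {n : ℕ}
    {J J' : Set (Fin (n - 1))} (hJ : J ⊆ J') :
    parabolicJ F q J ≤ parabolicJ F q J' := by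
  apply Algebra.adjoin_mono
  apply Set.union_subset_union_right
  rintro y ⟨j, hj, rfl⟩
  exact ⟨j, hJ hj, rfl⟩

/-- The inclusion `H_{μ ∩ xν} ⊆ H_μ`. -/
def JcapIncl (F : Type) [Field F] (q : F) {n : ℕ} (μ ν : List ℕ)
    (x : Equiv.Perm (Fin n)) :
    ↥(parabolicJ F q (Jcap μ ν x)) →ₐ[F] ↥(parabolicC F q (n := n) μ) :=
  Subalgebra.inclusion (parabolicJ_mono F q fun _ hj => hj.1)

section Mackey
open Equiv MulOpposite

open Equiv

/-! ### Combinatorics of the symmetric group -/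

section Combinatorics

variable {n : ℕ}

theorem s_lo (i : Fin (n - 1)) : s i (lo i) = hi i := swap_apply_left _ _

theorem s_hi (i : Fin (n - 1)) : s i (hi i) = lo i := swap_apply_right _ _

theorem lo_lt_hi (i : Fin (n - 1)) : lo i < hi i := by
  simp [lo, hi, Fin.lt_def]

theorem lo_ne_hi (i : Fin (n - 1)) : lo i ≠ hi i := (lo_lt_hi i).ne

theorem s_of_ne (i : Fin (n - 1)) {k : Fin n} (h1 : k ≠ lo i) (h2 : k ≠ hi i) : s i k = k :=
  swap_apply_of_ne_of_ne h1 h2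

theorem s_mul_s (i : Fin (n - 1)) : s i * s i = 1 := swap_mul_self _ _

theorem s_inv (i : Fin (n - 1)) : (s i)⁻¹ = s i := swap_inv _ _

theorem mul_s_mul_s (w : Perm (Fin n)) (i : Fin (n - 1)) : w * s i * s i = w := by
  rw [mul_assoc, s_mul_s, mul_one]

theorem s_s (i : Fin (n - 1)) (k : Fin n) : s i (s i k) = k := swap_apply_self _ _ _

theorem s_lt_s (i : Fin (n - 1)) {a b : Fin n} (h : a < b) (hne : a = lo i → b ≠ hi i) :
    s i a < s i b := by
  simp only [s, swap_apply_def]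
  simp only [lo, hi, Fin.lt_def, Fin.ext_iff, ne_eq] at *
  split_ifs <;> simp at * <;> omega

/-- Interchanging two values which are in increasing order increases the length. -/
theorem len_lt_len_mul_swap (w : Perm (Fin n)) {p r : Fin n} (hpr : p < r) (hw : w p < w r) :
    len w < len (w * swap p r) := by
  classical
  let f : Fin n × Fin n → Fin n × Fin n := fun z =>
    if swap p r z.1 < swap p r z.2 then (swap p r z.1, swap p r z.2) else z
  have hnot : ¬ (swap p r p < swap p r r) := by
    simpa using hpr.le
  unfold len
  set S := (Finset.univ : Finset (Fin n × Fin n)).filter fun z => z.1 < z.2 ∧ w z.2 < w z.1 with hS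
  have hmemS : ∀ z, z ∈ S ↔ z.1 < z.2 ∧ w z.2 < w z.1 := fun z => by simp [hS]
  have hinj : Set.InjOn f S := by
    rintro ⟨i, j⟩ hz ⟨i', j'⟩ hz' h
    have h1 := (hmemS _).1 hz
    have h1' := (hmemS _).1 hz'
    simp only [f] at h
    split_ifs at h with ha hb hb
    · simpa using h
    · obtain ⟨rfl, rfl⟩ := Prod.mk.inj h
      simp at hb
      exact absurd h1.1 (not_lt.2 hb)
    · obtain ⟨rfl, rfl⟩ := Prod.mk.inj h
      simp at ha
      exact absurd h1'.1 (not_lt.2 ha)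
    · exact h
  rw [← Finset.card_image_of_injOn hinj]
  apply Finset.card_lt_card
  rw [Finset.ssubset_iff]
  refine ⟨(p, r), ?_, ?_⟩
  · rw [Finset.mem_image]
    rintro ⟨⟨i, j⟩, hz, h⟩
    have h1 := (hmemS _).1 hz
    simp only [f] at h
    split_ifs at h with ha
    · obtain ⟨h3, h4⟩ := Prod.mk.inj h
      rw [swap_apply_eq_iff] at h3 h4
      simp at h3 h4
      subst h3 h4
      exact absurd h1.1 (not_lt.2 hpr.le)
    · obtain ⟨rfl, rfl⟩ := Prod.mk.inj h
      exact absurd h1.2 (not_lt.2 hw.le)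
  · rw [Finset.insert_subset_iff]
    constructor
    · exact Finset.mem_filter.2 ⟨Finset.mem_univ _, hpr, by simpa using hw⟩
    · intro z hz'
      obtain ⟨⟨i, j⟩, hz, rfl⟩ := Finset.mem_image.1 hz'
      have h1 := (hmemS _).1 hz
      simp only [Finset.mem_filter, Finset.mem_univ, true_and, f]
      split_ifs with ha
      · refine ⟨ha, ?_⟩
        simpa using h1.2
      · refine ⟨h1.1, ?_⟩
        simp only [Perm.mul_apply]
        have h2 := h1.1
        have h3 := h1.2
        simp only [swap_apply_def] at ha ⊢
        by_cases e1 : i = p <;> by_cases e2 : i = r <;> by_cases e3 : j = p <;>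
          by_cases e4 : j = r <;> simp_all <;> order

theorem len_lt_len_mul_s (w : Perm (Fin n)) {i : Fin (n - 1)} (h : w (lo i) < w (hi i)) :
    len w < len (w * s i) :=
  len_lt_len_mul_swap w (lo_lt_hi i) h

theorem len_mul_s_lt (w : Perm (Fin n)) {i : Fin (n - 1)} (h : w (hi i) < w (lo i)) :
    len (w * s i) < len w := by
  have := len_lt_len_mul_s (w * s i) (i := i) (by simpa [s_lo, s_hi] using h)
  rwa [mul_s_mul_s] at this

theorem len_inv (w : Perm (Fin n)) : len w⁻¹ = len w := by
  unfold len
  refine Finset.card_nbij' (fun z => (w⁻¹ z.2, w⁻¹ z.1)) (fun z => (w z.2, w z.1)) ?_ ?_ ?_ ?_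
  · rintro ⟨a, b⟩ h; simpa [and_comm] using h
  · rintro ⟨a, b⟩ h; simpa [and_comm] using h
  · rintro ⟨a, b⟩ h; simp
  · rintro ⟨a, b⟩ h; simp

/-- The Young subgroup of permutations preserving the fibres of `c`. -/
def young {κ : Type*} (c : Fin n → κ) : Subgroup (Perm (Fin n)) where
  carrier := {w | ∀ k, c (w k) = c k}
  one_mem' _ := rfl
  mul_mem' {u v} hu hv k := by rw [Perm.mul_apply, hu, hv]
  inv_mem' {u} hu k := by simpa using (hu (u⁻¹ k)).symm

/-- The simple reflections lying in the Young subgroup of `c`. -/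
def youngJ {κ : Type*} (c : Fin n → κ) : Set (Fin (n - 1)) := {j | c (lo j) = c (hi j)}

theorem swap_mem_young {κ : Type*} {c : Fin n → κ} {a b : Fin n} :
    swap a b ∈ young c ↔ c a = c b := by
  constructor
  · intro h; simpa using (h b)
  · intro h k
    rw [swap_apply_def]
    split_ifs with h1 h2 <;> simp_all

theorem s_mem_young {κ : Type*} {c : Fin n → κ} {i : Fin (n - 1)} :
    s i ∈ young c ↔ i ∈ youngJ c := swap_mem_young

/-- `w` is increasing on the fibres of `c`: a minimal length representative of its left coset
modulo the Young subgroup of `c`. -/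
def IsMinLeft {κ : Type*} (c : Fin n → κ) (w : Perm (Fin n)) : Prop :=
  ∀ a b, a < b → c a = c b → w a < w b

variable {κ : Type*} [LinearOrder κ] {c : Fin n → κ}

theorem isMinLeft_of_simple (hc : Monotone c) {w : Perm (Fin n)}
    (h : ∀ i ∈ youngJ c, w (lo i) < w (hi i)) : IsMinLeft c w := by
  suffices H : ∀ (d : ℕ) (a b : Fin n), (b : ℕ) = a + d + 1 → c a = c b → w a < w b by
    intro a b hab hcab
    have := Fin.lt_def.1 hab
    exact H (b - a - 1) a b (by omega) hcab
  intro d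
  induction d with
  | zero =>
    intro a b hab hcab
    have hb := b.isLt
    let i : Fin (n - 1) := ⟨a, by omega⟩
    have ha : a = lo i := rfl
    have hb' : b = hi i := Fin.ext (by simpa [hi, i] using hab)
    rw [ha, hb'] at hcab ⊢
    exact h i hcab
  | succ d ih =>
    intro a b hab hcab
    have hb := b.isLt
    let i : Fin (n - 1) := ⟨a, by omega⟩
    have h1 : a ≤ hi i := Fin.le_def.2 (by simp [hi, i])
    have h2 : hi i ≤ b := Fin.le_def.2 (by simp [hi, i]; omega)
    have h3 : c a = c (hi i) := le_antisymm (hc h1) (hcab ▸ hc h2)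
    exact (h i h3).trans (ih (hi i) b (by simp [hi, i]; omega) (h3 ▸ hcab))

theorem eq_one_of_strictMono {w : Perm (Fin n)} (h : StrictMono w) : w = 1 := by
  have : StrictMono.orderIsoOfSurjective w h w.surjective = OrderIso.refl (Fin n) :=
    Subsingleton.elim _ _
  exact Perm.ext fun k => congrArg (fun e : Fin n ≃o Fin n => e k) this

theorem eq_one_of_mem_young (hc : Monotone c) {w : Perm (Fin n)} (hw : w ∈ young c)
    (h : IsMinLeft c w) : w = 1 := by
  refine eq_one_of_strictMono fun a b hab => ?_
  by_cases hcab : c a = c b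
  · exact h a b hab hcab
  · refine hc.reflect_lt ?_
    rw [hw, hw]
    exact lt_of_le_of_ne (hc hab.le) hcab

theorem lt_of_fiber_lt (hc : Monotone c) {u : Perm (Fin n)} (hu : u ∈ young c) {a b : Fin n}
    (h : c a < c b) : u a < u b :=
  hc.reflect_lt (by rwa [hu, hu])

theorem exists_descent {w : Perm (Fin n)} (hw : w ≠ 1) : ∃ i, w (hi i) < w (lo i) := by
  by_contra! H
  refine hw (eq_one_of_strictMono fun a b hab => ?_)
  refine isMinLeft_of_simple (c := fun _ : Fin n => (0 : ℕ)) monotone_const ?_ a b hab rfl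
  exact fun i _ => lt_of_le_of_ne (H i) fun h => lo_ne_hi i (w.injective h)

theorem isMinLeft_unique (hc : Monotone c) {d d' u u' : Perm (Fin n)} (hd : IsMinLeft c d)
    (hd' : IsMinLeft c d') (hu : u ∈ young c) (hu' : u' ∈ young c) (h : d * u = d' * u') :
    d = d' ∧ u = u' := by
  have hv : u' * u⁻¹ ∈ young c := mul_mem hu' (inv_mem hu)
  have hd1 : d = d' * (u' * u⁻¹) := by rw [← mul_assoc, ← h]; simp
  have h1 : u' * u⁻¹ = 1 := by
    refine eq_one_of_mem_young hc hv fun a b hab hcab => ?_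
    have h2 := hd a b hab hcab
    rw [hd1, Perm.mul_apply d', Perm.mul_apply d'] at h2
    by_contra H
    rcases lt_or_eq_of_le (not_lt.1 H) with H | H
    · exact absurd (hd' _ _ H (by rw [hv, hv, hcab])) (not_lt.2 h2.le)
    · rw [H] at h2; exact lt_irrefl _ h2
  refine ⟨by rw [hd1, h1, mul_one], ?_⟩
  rw [mul_inv_eq_one] at h1
  exact h1.symm

/-! ### The Bruhat order -/

theorem BruhatStep.mul_s {w : Perm (Fin n)} {i : Fin (n - 1)} (h : w (lo i) < w (hi i)) :
    BruhatStep w (w * s i) :=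
  ⟨w (lo i), w (hi i), h.ne, by rw [s, Equiv.mul_swap_eq_swap_mul], len_lt_len_mul_s w h⟩

theorem BruhatStep.inv {v w : Perm (Fin n)} (h : BruhatStep v w) : BruhatStep v⁻¹ w⁻¹ := by
  obtain ⟨a, b, hab, rfl, hl⟩ := h
  refine ⟨v⁻¹ a, v⁻¹ b, by simpa using hab, ?_, by simpa only [len_inv] using hl⟩
  rw [mul_inv_rev, swap_inv, Equiv.mul_swap_eq_swap_mul]

theorem BruhatLE.inv {v w : Perm (Fin n)} (h : BruhatLE v w) : BruhatLE v⁻¹ w⁻¹ :=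
  Relation.ReflTransGen.lift (fun x => x⁻¹) (fun _ _ => BruhatStep.inv) _ _ h

theorem BruhatLE.len_le {v w : Perm (Fin n)} (h : BruhatLE v w) : len v ≤ len w := by
  induction h with
  | refl => exact le_rfl
  | tail _ h ih => exact ih.trans h.choose_spec.choose_spec.2.2.le

theorem bruhatStep_iff {v w : Perm (Fin n)} :
    BruhatStep v w ↔ ∃ p r, p < r ∧ v p < v r ∧ w = v * swap p r := by
  constructor
  · rintro ⟨a, b, hab, rfl, hl⟩
    wlog h : v⁻¹ a < v⁻¹ b generalizing a b
    · rw [swap_comm] at hl ⊢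
      refine this b a hab.symm hl ?_
      exact lt_of_le_of_ne (not_lt.1 h) fun h' => hab (v⁻¹.injective h').symm
    have key : swap a b * v = v * swap (v⁻¹ a) (v⁻¹ b) := by
      rw [Equiv.mul_swap_eq_swap_mul]; simp
    refine ⟨v⁻¹ a, v⁻¹ b, h, ?_, key⟩
    by_contra H
    have H' : v (v⁻¹ b) < v (v⁻¹ a) :=
      lt_of_le_of_ne (not_lt.1 H) fun h' => by simp at h'; exact hab h'.symm
    have := len_lt_len_mul_swap (v * swap (v⁻¹ a) (v⁻¹ b)) h (by simpa using H')
    rw [mul_assoc, swap_mul_self, mul_one, ← key] at this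
    exact lt_asymm hl this
  · rintro ⟨p, r, hpr, hv, rfl⟩
    exact ⟨v p, v r, hv.ne, Equiv.mul_swap_eq_swap_mul _ _ _, len_lt_len_mul_swap v hpr hv⟩

theorem BruhatStep.mul_s_or {v w : Perm (Fin n)} (h : BruhatStep v w) (i : Fin (n - 1)) :
    w = v * s i ∨ BruhatStep (v * s i) (w * s i) := by
  obtain ⟨p, r, hpr, hv, rfl⟩ := bruhatStep_iff.1 h
  by_cases hp : p = lo i ∧ r = hi i
  · left; rw [hp.1, hp.2, s]
  · right
    refine bruhatStep_iff.2 ⟨s i p, s i r, s_lt_s i hpr fun h1 h2 => hp ⟨h1, h2⟩, ?_, ?_⟩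
    · simpa [s_s] using hv
    · rw [mul_assoc, mul_assoc, Equiv.mul_swap_eq_swap_mul (s i), s_s, s_s]

theorem BruhatLE.mul_s {v w : Perm (Fin n)} (h : BruhatLE v w) {i : Fin (n - 1)}
    (hw : w (lo i) < w (hi i)) : BruhatLE (v * s i) (w * s i) := by
  induction h using Relation.ReflTransGen.head_induction_on with
  | refl => exact .refl
  | head h1 h2 ih =>
    rcases h1.mul_s_or i with rfl | h3
    · exact h2.tail (BruhatStep.mul_s hw)
    · exact .head h3 ih

/-- Every permutation is the product of a minimal coset representative below it and an element
of the Young subgroup. -/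
theorem exists_isMinLeft (hc : Monotone c) (w : Perm (Fin n)) :
    ∃ d u, IsMinLeft c d ∧ u ∈ young c ∧ w = d * u ∧ BruhatLE d w := by
  induction hl : len w using Nat.strong_induction_on generalizing w with
  | _ l ih =>
    subst hl
    by_cases h : ∀ i ∈ youngJ c, w (lo i) < w (hi i)
    · exact ⟨w, 1, isMinLeft_of_simple hc h, one_mem _, by simp, .refl⟩
    · push Not at h
      obtain ⟨i, hi1, hi2⟩ := h
      have hi3 : w (hi i) < w (lo i) :=
        lt_of_le_of_ne hi2 fun h => lo_ne_hi i (w.injective h).symm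
      obtain ⟨d, u, hd, hu, hw, hle⟩ := ih _ (len_mul_s_lt w hi3) (w * s i) rfl
      refine ⟨d, u * s i, hd, mul_mem hu (s_mem_young.2 hi1), ?_, ?_⟩
      · rw [← mul_assoc, ← hw, mul_s_mul_s]
      · refine hle.tail ?_
        have := BruhatStep.mul_s (w := w * s i) (i := i) (by simpa [s_lo, s_hi] using hi3)
        rwa [mul_s_mul_s] at this

/-- The inversions of `v` persist in `u * v`; equivalently, lengths add in the product. -/
def IsReducedMul (u v : Perm (Fin n)) : Prop :=
  ∀ a b, a < b → v b < v a → u (v b) < u (v a)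

theorem isReducedMul_of_isMinLeft (hc : Monotone c) {d u : Perm (Fin n)} (hd : IsMinLeft c d)
    (hu : u ∈ young c) : IsReducedMul d u := by
  intro a b hab h
  refine hd _ _ h (le_antisymm (hc h.le) ?_)
  rw [hu, hu]
  exact hc hab.le

theorem fiber_lt_of_inversion (hc : Monotone c) {x : Perm (Fin n)} (hx : IsMinLeft c x⁻¹)
    {a b : Fin n} (hab : a < b) (h : x b < x a) : c (x b) < c (x a) := by
  refine lt_of_le_of_ne (hc h.le) fun h' => ?_
  have := hx _ _ h h'
  simp at this
  exact lt_asymm hab this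

theorem isReducedMul_of_isMinLeft_inv (hc : Monotone c) {u x : Perm (Fin n)}
    (hx : IsMinLeft c x⁻¹) (hu : u ∈ young c) : IsReducedMul u x := fun _ _ hab h =>
  lt_of_fiber_lt hc hu (fiber_lt_of_inversion hc hx hab h)

theorem IsReducedMul.mul_s {u v : Perm (Fin n)} (h : IsReducedMul u v) {i : Fin (n - 1)}
    (hv : v (hi i) < v (lo i)) : IsReducedMul u (v * s i) := by
  intro a b hab hvab
  refine h (s i a) (s i b) (s_lt_s i hab ?_) hvab
  rintro rfl rfl
  simp [s_lo, s_hi] at hvab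
  exact lt_asymm hv hvab

end Combinatorics

/-! ### Identities in an algebra with Hecke–Clifford elements -/

theorem mul_left_of {R : Type*} [Semigroup R] {a b c : R} (h : a * b = c) (z : R) :
    a * (b * z) = c * z := by rw [← mul_assoc, h]

section
variable {F : Type} [Field F] {R : Type} [Ring R] [Algebra F R]

theorem braid_c (ξ : F) {t1 t2 c1 c2 c3 : R}
    (h1 : t1 * t1 = ξ • t1 + 1) (h2 : t2 * t2 = ξ • t2 + 1)
    (c11 : c1 * t1 = t1 * c2 + ξ • (c1 - c2)) (c21 : c2 * t1 = t1 * c1) (c31 : c3 * t1 = t1 * c3)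
    (c22 : c2 * t2 = t2 * c3 + ξ • (c2 - c3)) (c32 : c3 * t2 = t2 * c2) (c12 : c1 * t2 = t2 * c1) :
    c1 * (t1 * t2 * t1 - t2 * t1 * t2) = (t1 * t2 * t1 - t2 * t1 * t2) * c3 ∧
    c2 * (t1 * t2 * t1 - t2 * t1 * t2) = (t1 * t2 * t1 - t2 * t1 * t2) * c2 ∧
    c3 * (t1 * t2 * t1 - t2 * t1 * t2) = (t1 * t2 * t1 - t2 * t1 * t2) * c1 := by
  have e1 := mul_left_of h1
  have e2 := mul_left_of h2
  have f1 := mul_left_of c11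
  have f2 := mul_left_of c21
  have f3 := mul_left_of c31
  have f4 := mul_left_of c22
  have f5 := mul_left_of c32
  have f6 := mul_left_of c12
  refine ⟨?_, ?_, ?_⟩ <;>
  · simp only [mul_add, add_mul, mul_sub, sub_mul, smul_mul_assoc, mul_smul_comm, mul_assoc,
      one_mul, smul_add, smul_sub, c11, c21, c31, c22, c32, c12, f1, f2, f3, f4, f5, f6, e1, e2]
    try module

theorem braid_x (ξ : F) {t1 t2 c1 c2 c3 x1 x2 x3 : R}
    (h1 : t1 * t1 = ξ • t1 + 1) (h2 : t2 * t2 = ξ • t2 + 1)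
    (c11 : c1 * t1 = t1 * c2 + ξ • (c1 - c2)) (c21 : c2 * t1 = t1 * c1) (c31 : c3 * t1 = t1 * c3)
    (c22 : c2 * t2 = t2 * c3 + ξ • (c2 - c3)) (c32 : c3 * t2 = t2 * c2) (c12 : c1 * t2 = t2 * c1)
    (d1 : c1 * c1 = 1) (d2 : c2 * c2 = 1) (d3 : c3 * c3 = 1)
    (a21 : c2 * c1 = -(c1 * c2)) (a31 : c3 * c1 = -(c1 * c3)) (a32 : c3 * c2 = -(c2 * c3))
    (x11 : x1 * t1 = t1 * x2 + ξ • ((c1 * c2 - 1) * x2))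
    (x21 : x2 * t1 = t1 * x1 + ξ • (x2 + c1 * c2 * x1)) (x31 : x3 * t1 = t1 * x3)
    (x22 : x2 * t2 = t2 * x3 + ξ • ((c2 * c3 - 1) * x3))
    (x32 : x3 * t2 = t2 * x2 + ξ • (x3 + c2 * c3 * x2)) (x12 : x1 * t2 = t2 * x1) :
    x1 * (t1 * t2 * t1 - t2 * t1 * t2) = (t1 * t2 * t1 - t2 * t1 * t2) * x3 ∧
    x2 * (t1 * t2 * t1 - t2 * t1 * t2) = (t1 * t2 * t1 - t2 * t1 * t2) * x2 ∧
    x3 * (t1 * t2 * t1 - t2 * t1 * t2) = (t1 * t2 * t1 - t2 * t1 * t2) * x1 := by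
  have e1 := mul_left_of h1
  have e2 := mul_left_of h2
  have f1 := mul_left_of c11
  have f2 := mul_left_of c21
  have f3 := mul_left_of c31
  have f4 := mul_left_of c22
  have f5 := mul_left_of c32
  have f6 := mul_left_of c12
  have g1 := mul_left_of d1
  have g2 := mul_left_of d2
  have g3 := mul_left_of d3
  have k1 := mul_left_of a21
  have k2 := mul_left_of a31
  have k3 := mul_left_of a32
  have y1 := mul_left_of x11
  have y2 := mul_left_of x21
  have y3 := mul_left_of x31
  have y4 := mul_left_of x22
  have y5 := mul_left_of x32
  have y6 := mul_left_of x12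
  refine ⟨?_, ?_, ?_⟩ <;>
  · simp only [mul_add, add_mul, mul_sub, sub_mul, smul_mul_assoc, mul_smul_comm, mul_assoc,
      one_mul, smul_add, smul_sub, mul_neg, neg_mul, smul_neg, neg_neg, f1, f2, f3, f4, f5, f6,
      e1, e2, x11, x21, x31, x22, x32, x12, g1, g2, g3, k1, k2, k3, y1, y2, y3, y4, y5, y6]
    module

variable {n : ℕ}

/-- The defining relations of the Clifford–Laurent algebra. -/
structure IsCL (x xi c : Fin n → R) : Prop where
  x_xi : ∀ j, x j * xi j = 1
  xi_x : ∀ j, xi j * x j = 1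
  xx : ∀ j k, x j * x k = x k * x j
  cc : ∀ j, c j * c j = 1
  canti : ∀ j k, j ≠ k → c j * c k = -(c k * c j)
  cx : ∀ j, c j * x j = xi j * c j
  cxo : ∀ j k, j ≠ k → c j * x k = x k * c j

/-- The commutation relations between `T_i` and the Clifford–Laurent generators. -/
structure IsTwist (ξ : F) (x c : Fin n → R) (i : Fin (n - 1)) (t : R) : Prop where
  x_lo : x (lo i) * t = t * x (hi i) + ξ • ((c (lo i) * c (hi i) - 1) * x (hi i))
  x_hi : x (hi i) * t = t * x (lo i) + ξ • (x (hi i) + c (lo i) * c (hi i) * x (lo i))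
  c_lo : c (lo i) * t = t * c (hi i) + ξ • (c (lo i) - c (hi i))
  c_hi : c (hi i) * t = t * c (lo i)
  xo : ∀ j, j ≠ lo i → j ≠ hi i → x j * t = t * x j
  co : ∀ j, j ≠ lo i → j ≠ hi i → c j * t = t * c j

theorem inv_mul_comm_of {a ai b bi g : R} (h1 : ai * a = 1) (h2 : b * bi = 1)
    (h : a * g = g * b) : ai * g = g * bi := by
  calc ai * g = ai * (g * (b * bi)) := by rw [h2, mul_one]
    _ = ai * (a * g) * bi := by rw [h]; noncomm_ring
    _ = (ai * a) * (g * bi) := by noncomm_ring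
    _ = g * bi := by rw [h1, one_mul]

namespace IsCL

variable {x xi c : Fin n → R}

theorem xixi (h : IsCL x xi c) (j k : Fin n) : xi j * xi k = xi k * xi j :=
  inv_mul_comm_of (h.xi_x j) (h.x_xi j)
    (inv_mul_comm_of (h.xi_x k) (h.x_xi k) (h.xx k j)).symm

theorem xxi (h : IsCL x xi c) (j k : Fin n) : x j * xi k = xi k * x j :=
  (inv_mul_comm_of (h.xi_x k) (h.x_xi k) (h.xx k j)).symm

theorem cxi (h : IsCL x xi c) (j : Fin n) : c j * xi j = x j * c j := by
  calc c j * xi j = (x j * xi j) * c j * xi j := by rw [h.x_xi, one_mul]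
    _ = x j * (c j * x j) * xi j := by rw [h.cx]; noncomm_ring
    _ = x j * c j * (x j * xi j) := by noncomm_ring
    _ = x j * c j := by rw [h.x_xi, mul_one]

theorem cxio (h : IsCL x xi c) (j k : Fin n) (hjk : j ≠ k) : c j * xi k = xi k * c j :=
  (inv_mul_comm_of (h.xi_x k) (h.x_xi k) (h.cxo j k hjk).symm).symm

end IsCL

/-- Case distinction on the position of an index relative to `i, i + 1`. -/
theorem index_cases (i : Fin (n - 1)) (j : Fin n) :
    j = lo i ∨ j = hi i ∨ (j ≠ lo i ∧ j ≠ hi i) := by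
  tauto

namespace IsTwist

variable {x xi c : Fin n → R} {ξ : F} {i : Fin (n - 1)} {t : R}

theorem quad_x (h : IsCL x xi c) (ht : IsTwist ξ x c i t) (j : Fin n) :
    x j * (t * t - ξ • t - 1) = (t * t - ξ • t - 1) * x j := by
  have a1 := ht.x_lo
  have a2 := ht.x_hi
  have a3 := ht.c_lo
  have a4 := ht.c_hi
  have a5 := h.canti (hi i) (lo i) (lo_ne_hi i).symm
  have a6 := h.cc (lo i)
  have a7 := h.cc (hi i)
  have b1 := mul_left_of a1
  have b2 := mul_left_of a2
  have b3 := mul_left_of a3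
  have b4 := mul_left_of a4
  have b5 := mul_left_of a5
  have b6 := mul_left_of a6
  have b7 := mul_left_of a7
  rcases index_cases i j with rfl | rfl | ⟨h1, h2⟩
  · simp only [mul_add, add_mul, mul_sub, sub_mul, smul_mul_assoc, mul_smul_comm, mul_assoc,
      one_mul, mul_one, smul_add, smul_sub, mul_neg, neg_mul, smul_neg, a1, a2,
      b1, b3, b4, b5, b6, b7]
    module
  · simp only [mul_add, add_mul, mul_sub, sub_mul, smul_mul_assoc, mul_smul_comm, mul_assoc,
      one_mul, mul_one, smul_add, smul_sub, mul_neg, neg_mul, smul_neg, a1, a2,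
      b2, b3, b4, b5, b6, b7]
    module
  · have a := ht.xo j h1 h2
    simp only [mul_sub, sub_mul, mul_smul_comm, smul_mul_assoc, mul_assoc, mul_left_of a, a,
      mul_one, one_mul]

theorem quad_c (ht : IsTwist ξ x c i t) (j : Fin n) :
    c j * (t * t - ξ • t - 1) = (t * t - ξ • t - 1) * c j := by
  have a3 := ht.c_lo
  have a4 := ht.c_hi
  have b3 := mul_left_of a3
  have b4 := mul_left_of a4
  rcases index_cases i j with rfl | rfl | ⟨h1, h2⟩
  · simp only [add_mul, mul_sub, sub_mul, smul_mul_assoc, mul_smul_comm, mul_assoc,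
      one_mul, mul_one, smul_add, smul_sub, a3, a4, b3]
    module
  · simp only [mul_add, mul_sub, sub_mul, smul_mul_assoc, mul_smul_comm, mul_assoc,
      one_mul, mul_one, smul_sub, a3, a4, b4]
    module
  · have a := ht.co j h1 h2
    simp only [mul_sub, sub_mul, mul_smul_comm, smul_mul_assoc, mul_assoc, mul_left_of a, a,
      mul_one, one_mul]

theorem cc_mul (h : IsCL x xi c) (ht : IsTwist ξ x c i t) :
    c (lo i) * c (hi i) * t
      = -(t * (c (lo i) * c (hi i))) + ξ • (1 + c (lo i) * c (hi i)) := by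
  rw [mul_assoc, ht.c_hi, ← mul_assoc, ht.c_lo]
  simp only [add_mul, sub_mul, smul_mul_assoc, mul_assoc, h.cc,
    h.canti (hi i) (lo i) (lo_ne_hi i).symm, mul_neg]
  module

theorem cross (h : IsCL x xi c) (ht : IsTwist ξ x c i t) (hq : t * t = ξ • t + 1) :
    (t + ξ • (c (lo i) * c (hi i))) * x (lo i) * t = x (hi i) := by
  have a := cc_mul h ht
  have a5 := h.canti (hi i) (lo i) (lo_ne_hi i).symm
  rw [mul_assoc, ht.x_lo]
  have e : t * x (hi i) + ξ • ((c (lo i) * c (hi i) - 1) * x (hi i))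
      = (t + ξ • (c (lo i) * c (hi i)) - ξ • 1) * x (hi i) := by
    simp only [add_mul, sub_mul, smul_mul_assoc]; module
  have hinv : (t + ξ • (c (lo i) * c (hi i))) * (t + ξ • (c (lo i) * c (hi i)) - ξ • 1) = 1 := by
    have a6 : c (lo i) * (c (hi i) * (c (lo i) * c (hi i))) = -1 := by
      rw [mul_left_of a5]; simp [mul_assoc, h.cc]
    rw [mul_assoc] at a
    simp only [mul_add, add_mul, mul_sub, smul_mul_assoc, mul_smul_comm, mul_assoc,
      mul_one, smul_add, smul_neg, hq, a, a6]
    module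
  rw [e, ← mul_assoc, hinv, one_mul]

/-- The commutation relations follow from the defining relations of `H_n`. -/
theorem of_rel (h : IsCL x xi c) (hq : t * t = ξ • t + 1)
    (hc : t * c (lo i) = c (hi i) * t)
    (hco : ∀ j, j ≠ lo i → j ≠ hi i → t * c j = c j * t)
    (hxo : ∀ j, j ≠ lo i → j ≠ hi i → t * x j = x j * t)
    (hcr : (t + ξ • (c (lo i) * c (hi i))) * x (lo i) * t = x (hi i)) :
    IsTwist ξ x c i t := by
  have t1 : t * (t - ξ • 1) = 1 := by
    simp only [mul_sub, hq, mul_smul_comm, mul_one]; module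
  have t2 : (t - ξ • 1) * t = 1 := by
    simp only [sub_mul, hq, smul_mul_assoc, one_mul]; module
  have hclo : c (lo i) * t = t * c (hi i) + ξ • (c (lo i) - c (hi i)) := by
    have : (t - ξ • (1 : R)) * c (hi i) = c (lo i) * (t - ξ • (1 : R)) :=
      calc (t - ξ • (1 : R)) * c (hi i) = (t - ξ • 1) * c (hi i) * (t * (t - ξ • 1)) := by
            rw [t1, mul_one]
        _ = (t - ξ • 1) * (c (hi i) * t) * (t - ξ • 1) := by simp only [mul_assoc]
        _ = (t - ξ • 1) * t * c (lo i) * (t - ξ • 1) := by rw [← hc]; simp only [mul_assoc]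
        _ = c (lo i) * (t - ξ • 1) := by rw [t2, one_mul]
    simp only [mul_sub, sub_mul, mul_smul_comm, smul_mul_assoc, one_mul, mul_one] at this
    rw [sub_eq_iff_eq_add.1 this.symm]
    module
  have a5 := h.canti (hi i) (lo i) (lo_ne_hi i).symm
  have a : c (lo i) * (c (hi i) * t)
      = -(t * (c (lo i) * c (hi i))) + ξ • (1 + c (lo i) * c (hi i)) := by
    rw [← hc, ← mul_assoc, hclo]
    simp only [add_mul, sub_mul, smul_mul_assoc, mul_assoc, h.cc, a5, mul_neg]
    module
  have e' : (t + ξ • (c (lo i) * c (hi i)) - ξ • 1) * (t + ξ • (c (lo i) * c (hi i))) = 1 := by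
    have a6 : c (lo i) * (c (hi i) * (c (lo i) * c (hi i))) = -1 := by
      rw [mul_left_of a5]; simp [mul_assoc, h.cc]
    simp only [mul_add, add_mul, sub_mul, smul_mul_assoc, mul_smul_comm, mul_assoc,
      one_mul, smul_add, smul_neg, hq, a, a6]
    module
  refine ⟨?_, ?_, hclo, hc.symm, fun j h1 h2 => (hxo j h1 h2).symm,
    fun j h1 h2 => (hco j h1 h2).symm⟩
  · have := congrArg (fun z => (t + ξ • (c (lo i) * c (hi i)) - ξ • 1) * z) hcr
    simp only [mul_assoc] at this e'
    rw [mul_left_of e', one_mul] at this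
    rw [this]
    simp only [add_mul, sub_mul, smul_mul_assoc, mul_assoc]
    module
  · conv_lhs => rw [← hcr]
    conv_rhs => enter [2, 2, 1]; rw [← hcr]
    rw [mul_assoc _ t t, hq]
    simp only [mul_add, add_mul, mul_smul_comm, smul_mul_assoc, mul_one]
    module

theorem braid {i' : Fin (n - 1)} {t' : R} (h : IsCL x xi c) (ht : IsTwist ξ x c i t)
    (ht' : IsTwist ξ x c i' t') (hii : (i' : ℕ) = (i : ℕ) + 1)
    (hq : t * t = ξ • t + 1) (hq' : t' * t' = ξ • t' + 1) (j : Fin n) :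
    ∃ k, x j * (t * t' * t - t' * t * t') = (t * t' * t - t' * t * t') * x k ∧
      c j * (t * t' * t - t' * t * t') = (t * t' * t - t' * t * t') * c k := by
  have e : lo i' = hi i := Fin.ext hii
  have n1 : hi i' ≠ lo i := by simp [hi, lo, Fin.ext_iff]; omega
  have n2 : hi i' ≠ hi i := by simp [hi, Fin.ext_iff]; omega
  have n3 : lo i ≠ lo i' := by simp [lo, Fin.ext_iff]; omega
  have a1 := ht'.x_lo
  have a2 := ht'.x_hi
  have a3 := ht'.c_lo
  have a4 := ht'.c_hi
  rw [e] at a1 a2 a3 a4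
  obtain ⟨c1, c2, c3⟩ := braid_c ξ hq hq' ht.c_lo ht.c_hi (ht.co _ n1 n2) a3 a4
    (ht'.co _ n3 n1.symm)
  obtain ⟨x1, x2, x3⟩ := braid_x ξ hq hq' ht.c_lo ht.c_hi (ht.co _ n1 n2) a3 a4
    (ht'.co _ n3 n1.symm) (h.cc _) (h.cc _) (h.cc _) (h.canti _ _ (lo_ne_hi i).symm)
    (h.canti _ _ n1) (h.canti _ _ n2) ht.x_lo ht.x_hi (ht.xo _ n1 n2) a1 a2
    (ht'.xo _ n3 n1.symm)
  by_cases j1 : j = lo i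
  · exact ⟨_, j1 ▸ x1, j1 ▸ c1⟩
  by_cases j2 : j = hi i
  · exact ⟨_, j2 ▸ x2, j2 ▸ c2⟩
  by_cases j3 : j = hi i'
  · exact ⟨_, j3 ▸ x3, j3 ▸ c3⟩
  have b1 := ht.xo j j1 j2
  have b2 := ht'.xo j (e ▸ j2) j3
  have b3 := ht.co j j1 j2
  have b4 := ht'.co j (e ▸ j2) j3
  refine ⟨j, ?_, ?_⟩ <;>
    simp only [mul_sub, sub_mul, mul_assoc, b1, b2, b3, b4, mul_left_of b1, mul_left_of b2,
      mul_left_of b3, mul_left_of b4]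

theorem far_aux {a a' b t u : R} (h : a * t = t * a' + b) (h1 : a * u = u * a)
    (h2 : a' * u = u * a') (h3 : b * u = u * b) : a * (t * u - u * t) = (t * u - u * t) * a' := by
  simp only [mul_sub, sub_mul, mul_left_of h, mul_left_of h1, h, h2, h3, add_mul, mul_add,
    mul_assoc]
  abel

theorem far_half {i' : Fin (n - 1)} {u : R} (ht : IsTwist ξ x c i t)
    (hu : IsTwist ξ x c i' u) (hii : (i : ℕ) + 1 < i' ∨ (i' : ℕ) + 1 < i) (j : Fin n)
    (hj : j ≠ lo i' ∧ j ≠ hi i') :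
    ∃ k, x j * (t * u - u * t) = (t * u - u * t) * x k ∧
      c j * (t * u - u * t) = (t * u - u * t) * c k := by
  have n1 : lo i ≠ lo i' := by simp [lo, Fin.ext_iff]; omega
  have n2 : lo i ≠ hi i' := by simp [lo, hi, Fin.ext_iff]; omega
  have n3 : hi i ≠ lo i' := by simp [lo, hi, Fin.ext_iff]; omega
  have n4 : hi i ≠ hi i' := by simp [hi, Fin.ext_iff]; omega
  have x1 := hu.xo _ n1 n2
  have x2 := hu.xo _ n3 n4
  have c1 := hu.co _ n1 n2
  have c2 := hu.co _ n3 n4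
  rcases index_cases i j with rfl | rfl | ⟨h1, h2⟩
  · refine ⟨_, far_aux ht.x_lo x1 x2 ?_, far_aux ht.c_lo c1 c2 ?_⟩ <;>
      simp only [mul_sub, sub_mul, smul_mul_assoc, mul_smul_comm, mul_assoc, one_mul, x2, c1,
        c2, mul_left_of c1, mul_left_of c2]
  · refine ⟨_, far_aux ht.x_hi x2 x1 ?_,
      far_aux (b := 0) (by rw [ht.c_hi, add_zero]) c2 c1 (by simp)⟩
    simp only [mul_add, add_mul, smul_mul_assoc, mul_smul_comm, mul_assoc, x1, x2,
        mul_left_of c1, mul_left_of c2]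
  · exact ⟨j, far_aux (b := 0) (by rw [ht.xo j h1 h2, add_zero]) (hu.xo j hj.1 hj.2)
        (hu.xo j hj.1 hj.2) (by simp),
      far_aux (b := 0) (by rw [ht.co j h1 h2, add_zero]) (hu.co j hj.1 hj.2)
        (hu.co j hj.1 hj.2) (by simp)⟩

theorem far {i' : Fin (n - 1)} {u : R} (ht : IsTwist ξ x c i t)
    (hu : IsTwist ξ x c i' u) (hii : (i : ℕ) + 1 < i') (j : Fin n) :
    ∃ k, x j * (t * u - u * t) = (t * u - u * t) * x k ∧
      c j * (t * u - u * t) = (t * u - u * t) * c k := by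
  by_cases hj : j ≠ lo i' ∧ j ≠ hi i'
  · exact far_half ht hu (.inl hii) j hj
  · have hj' : j ≠ lo i ∧ j ≠ hi i := by
      rw [not_and_or, not_not, not_not] at hj
      simp only [lo, hi, Fin.ext_iff, ne_eq] at *
      omega
    obtain ⟨k, h1, h2⟩ := far_half hu ht (.inr hii) j hj'
    refine ⟨k, ?_, ?_⟩
    · rw [← neg_sub, mul_neg, h1, neg_mul]
    · rw [← neg_sub, mul_neg, h2, neg_mul]

end IsTwist
end

/-! ### The Clifford–Laurent algebra -/

/-- Generators of the Clifford–Laurent algebra. -/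
inductive CLGen (n : ℕ) : Type
  | X : Fin n → CLGen n
  | Xinv : Fin n → CLGen n
  | C : Fin n → CLGen n

/-- The defining relations of the Clifford–Laurent algebra. -/
inductive CLRel (F : Type) [Field F] (n : ℕ) :
    FreeAlgebra F (CLGen n) → FreeAlgebra F (CLGen n) → Prop
  | x_xi (j : Fin n) : CLRel F n (.ι F (.X j) * .ι F (.Xinv j)) 1
  | xi_x (j : Fin n) : CLRel F n (.ι F (.Xinv j) * .ι F (.X j)) 1
  | xx (j k : Fin n) : CLRel F n (.ι F (.X j) * .ι F (.X k)) (.ι F (.X k) * .ι F (.X j))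
  | cc (j : Fin n) : CLRel F n (.ι F (.C j) * .ι F (.C j)) 1
  | canti (j k : Fin n) (h : j ≠ k) :
      CLRel F n (.ι F (.C j) * .ι F (.C k)) (-(.ι F (.C k) * .ι F (.C j)))
  | cx (j : Fin n) : CLRel F n (.ι F (.C j) * .ι F (.X j)) (.ι F (.Xinv j) * .ι F (.C j))
  | cxo (j k : Fin n) (h : j ≠ k) :
      CLRel F n (.ι F (.C j) * .ι F (.X k)) (.ι F (.X k) * .ι F (.C j))

/-- The algebra generated by commuting invertible `X_j` and Clifford generators `C_j` with
`C_j X_j = X_j⁻¹ C_j`. -/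
def CL (F : Type) [Field F] (n : ℕ) : Type := RingQuot (CLRel F n)

namespace CL

noncomputable instance (F : Type) [Field F] (n : ℕ) : Ring (CL F n) :=
  inferInstanceAs (Ring (RingQuot (CLRel F n)))

noncomputable instance (F : Type) [Field F] (n : ℕ) : Algebra F (CL F n) :=
  inferInstanceAs (Algebra F (RingQuot (CLRel F n)))

section
variable (F : Type) [Field F] {n : ℕ}

/-- The quotient map from the free algebra. -/
noncomputable def mk : FreeAlgebra F (CLGen n) →ₐ[F] CL F n := RingQuot.mkAlgHom F (CLRel F n)

theorem mk_rel {a b : FreeAlgebra F (CLGen n)} (h : CLRel F n a b) : mk F a = mk F b :=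
  RingQuot.mkAlgHom_rel F h

theorem mk_surjective : Function.Surjective (mk F (n := n)) :=
  RingQuot.mkAlgHom_surjective F (CLRel F n)

/-- The generator `X_j`. -/
noncomputable def gx (j : Fin n) : CL F n := mk F (.ι F (.X j))
/-- The generator `X_j⁻¹`. -/
noncomputable def gxi (j : Fin n) : CL F n := mk F (.ι F (.Xinv j))
/-- The generator `C_j`. -/
noncomputable def gc (j : Fin n) : CL F n := mk F (.ι F (.C j))

theorem isCL : IsCL (gx F (n := n)) (gxi F) (gc F) where
  x_xi j := by simpa [gx, gxi] using mk_rel F (CLRel.x_xi (F := F) j)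
  xi_x j := by simpa [gx, gxi] using mk_rel F (CLRel.xi_x (F := F) j)
  xx j k := by simpa [gx, gxi] using mk_rel F (CLRel.xx (F := F) j k)
  cc j := by simpa [gc] using mk_rel F (CLRel.cc (F := F) j)
  canti j k h := by simpa [gc] using mk_rel F (CLRel.canti (F := F) j k h)
  cx j := by simpa [gx, gc, gxi] using mk_rel F (CLRel.cx (F := F) j)
  cxo j k h := by simpa [gx, gc, gxi] using mk_rel F (CLRel.cxo (F := F) j k h)
end

variable {F : Type} [Field F] {n : ℕ} {R : Type} [Ring R] [Algebra F R] {x xi c : Fin n → R}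

/-- The universal property of the Clifford–Laurent algebra. -/
noncomputable def lift (h : IsCL x xi c) : CL F n →ₐ[F] R :=
  RingQuot.liftAlgHom F ⟨FreeAlgebra.lift F fun
    | .X j => x j
    | .Xinv j => xi j
    | .C j => c j, by
    intro a b hab
    cases hab <;> simp only [map_mul, map_one, map_neg, FreeAlgebra.lift_ι_apply]
    · exact h.x_xi _
    · exact h.xi_x _
    · exact h.xx _ _
    · exact h.cc _
    · exact h.canti _ _ ‹_›
    · exact h.cx _
    · exact h.cxo _ _ ‹_›⟩

theorem lift_mk (h : IsCL x xi c) (g : CLGen n) : lift (F := F) h (mk F (.ι F g)) =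
    match g with
    | .X j => x j
    | .Xinv j => xi j
    | .C j => c j :=
  (RingQuot.liftAlgHom_mkAlgHom_apply F _ _ _).trans (FreeAlgebra.lift_ι_apply _ _)

@[simp] theorem lift_gx (h : IsCL x xi c) (j : Fin n) : lift (F := F) h (gx F j) = x j :=
  lift_mk h _
@[simp] theorem lift_gxi (h : IsCL x xi c) (j : Fin n) : lift (F := F) h (gxi F j) = xi j :=
  lift_mk h _
@[simp] theorem lift_gc (h : IsCL x xi c) (j : Fin n) : lift (F := F) h (gc F j) = c j :=
  lift_mk h _

theorem induction {p : CL F n → Prop} (hs : ∀ r, p (algebraMap F _ r)) (hx : ∀ j, p (gx F j))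
    (hxi : ∀ j, p (gxi F j)) (hc : ∀ j, p (gc F j)) (hmul : ∀ a b, p a → p b → p (a * b))
    (hadd : ∀ a b, p a → p b → p (a + b)) (a : CL F n) : p a := by
  obtain ⟨a, rfl⟩ := mk_surjective F a
  induction a using FreeAlgebra.induction with
  | grade0 r => simpa using hs r
  | grade1 g => cases g with
    | X j => exact hx j
    | Xinv j => exact hxi j
    | C j => exact hc j
  | mul a b ha hb => simpa using hmul _ _ ha hb
  | add a b ha hb => simpa using hadd _ _ ha hb

theorem hom_ext {f g : CL F n →ₐ[F] R} (hx : ∀ j, f (gx F j) = g (gx F j))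
    (hxi : ∀ j, f (gxi F j) = g (gxi F j)) (hc : ∀ j, f (gc F j) = g (gc F j)) : f = g := by
  refine AlgHom.ext fun a => ?_
  induction a using induction with
  | hs r => simp
  | hx j => exact hx j
  | hxi j => exact hxi j
  | hc j => exact hc j
  | hmul a b ha hb => simp [ha, hb]
  | hadd a b ha hb => simp [ha, hb]

theorem _root_.HC.IsCL.comp (h : IsCL x xi c) (σ : Perm (Fin n)) :
    IsCL (x ∘ σ) (xi ∘ σ) (c ∘ σ) where
  x_xi _ := h.x_xi _
  xi_x _ := h.xi_x _
  xx _ _ := h.xx _ _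
  cc _ := h.cc _
  canti _ _ hjk := h.canti _ _ (σ.injective.ne hjk)
  cx _ := h.cx _
  cxo _ _ hjk := h.cxo _ _ (σ.injective.ne hjk)

/-- The action of permutations on the Clifford–Laurent algebra. -/
noncomputable def perm (σ : Perm (Fin n)) : CL F n →ₐ[F] CL F n := lift ((isCL F).comp σ)

@[simp] theorem perm_gx (σ : Perm (Fin n)) (j) : perm (F := F) σ (gx F j) = gx F (σ j) := by
  simp [perm]
@[simp] theorem perm_gxi (σ : Perm (Fin n)) (j) : perm (F := F) σ (gxi F j) = gxi F (σ j) := by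
  simp [perm]
@[simp] theorem perm_gc (σ : Perm (Fin n)) (j) : perm (F := F) σ (gc F j) = gc F (σ j) := by
  simp [perm]

theorem perm_mul (σ τ : Perm (Fin n)) (a : CL F n) : perm (σ * τ) a = perm σ (perm τ a) := by
  have : perm (F := F) (σ * τ) = (perm σ).comp (perm τ) := hom_ext (by simp) (by simp) (by simp)
  rw [this]; rfl

@[simp] theorem perm_one (a : CL F n) : perm 1 a = a := by
  have : perm (F := F) (1 : Perm (Fin n)) = AlgHom.id F _ := hom_ext (by simp) (by simp) (by simp)
  rw [this]; rfl

/-- The values on the generators `X_j` of the skew derivation attached to `s_i`. -/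
noncomputable def dx (ξ : F) (i : Fin (n - 1)) (j : Fin n) : CL F n :=
  if j = lo i then ξ • ((gc F (lo i) * gc F (hi i) - 1) * gx F (hi i))
  else if j = hi i then ξ • (gx F (hi i) + gc F (lo i) * gc F (hi i) * gx F (lo i)) else 0

/-- The values on the generators `C_j` of the skew derivation attached to `s_i`. -/
noncomputable def dc (ξ : F) (i : Fin (n - 1)) (j : Fin n) : CL F n :=
  if j = lo i then ξ • (gc F (lo i) - gc F (hi i)) else 0

/-- The values on the generators `X_j⁻¹` of the skew derivation attached to `s_i`. -/
noncomputable def dxi (ξ : F) (i : Fin (n - 1)) (j : Fin n) : CL F n :=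
  -(gxi F j * dx ξ i j * gxi F (s i j))

theorem utri_mul {R : Type*} [Ring R] (a b c a' b' c' : R) :
    !![a, b; 0, c] * !![a', b'; 0, c'] = !![a * a', a * b' + b * c'; 0, c * c'] := by
  simp

theorem one_utri {R : Type*} [Ring R] : (1 : Matrix (Fin 2) (Fin 2) R) = !![1, 0; 0, 1] :=
  Matrix.one_fin_two

theorem neg_utri {R : Type*} [Ring R] (a b c : R) :
    -!![a, b; 0, c] = !![-a, -b; 0, -c] := by
  ext i j; fin_cases i <;> fin_cases j <;> simp

theorem utri_congr {R : Type*} [Ring R] {a b c a' b' c' : R} (ha : a = a') (hb : b = b')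
    (hc : c = c') : !![a, b; 0, c] = !![a', b'; 0, c'] := by
  rw [ha, hb, hc]

theorem isCL_utri (ξ : F) (i : Fin (n - 1)) :
    IsCL (fun j => !![gx F j, dx ξ i j; 0, gx F (s i j)])
      (fun j => !![gxi F j, dxi ξ i j; 0, gxi F (s i j)])
      (fun j => !![gc F j, dc ξ i j; 0, gc F (s i j)]) := by
  have h := isCL F (n := n)
  have hs := h.comp (s i)
  have ne := lo_ne_hi i
  have xc (j) : gx F j * gc F j = gc F j * gxi F j := (h.cxi j).symm
  have xic (j) : gxi F j * gc F j = gc F j * gx F j := (h.cx j).symm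
  have xco (j k) (hjk : k ≠ j) : gx F j * gc F k = gc F k * gx F j := (h.cxo _ _ hjk).symm
  have xico (j k) (hjk : k ≠ j) : gxi F j * gc F k = gc F k * gxi F j := (h.cxio _ _ hjk).symm
  have xcs (j k) (hjk : j ≠ k) : gx F j * gc F k = gc F k * gx F j := xco j k hjk.symm
  have xics (j k) (hjk : j ≠ k) : gxi F j * gc F k = gc F k * gxi F j := xico j k hjk.symm
  have xcs' (j k) (hjk : j ≠ k) := mul_left_of (xcs j k hjk)
  have xics' (j k) (hjk : j ≠ k) := mul_left_of (xics j k hjk)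
  have a1 := h.canti (hi i) (lo i) ne.symm
  have a2 := mul_left_of a1
  have xc' (j) := mul_left_of (xc j)
  have xic' (j) := mul_left_of (xic j)
  have xco' (j k) (hjk : k ≠ j) := mul_left_of (xco j k hjk)
  have xico' (j k) (hjk : k ≠ j) := mul_left_of (xico j k hjk)
  have cc' (j) := mul_left_of (h.cc j)
  have xx1 := h.xx (hi i) (lo i)
  have xx2 := mul_left_of xx1
  have u1 (j) := mul_left_of (h.xi_x j)
  have u2 (j) := mul_left_of (h.x_xi j)
  have xxi1 (j k) := h.xxi j k
  have u3 (j) (_ : j ≠ lo i) (_ : j ≠ hi i) := h.xx j (hi i)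
  have u4 (j) (_ : j ≠ lo i) (_ : j ≠ hi i) := h.xx j (lo i)
  have u3' (j) (h1 : j ≠ lo i) (h2 : j ≠ hi i) := mul_left_of (u3 j h1 h2)
  have u4' (j) (h1 : j ≠ lo i) (h2 : j ≠ hi i) := mul_left_of (u4 j h1 h2)
  have c3 (j) (h1 : j ≠ lo i) (_ : j ≠ hi i) := h.canti j (lo i) h1
  have c4 (j) (_ : j ≠ lo i) (h1 : j ≠ hi i) := h.canti j (hi i) h1
  have c3' (j) (h1 : j ≠ lo i) (h2 : j ≠ hi i) := mul_left_of (c3 j h1 h2)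
  have c4' (j) (h1 : j ≠ lo i) (h2 : j ≠ hi i) := mul_left_of (c4 j h1 h2)
  constructor
  · intro j
    rw [utri_mul, one_utri]
    refine utri_congr (h.x_xi _) ?_ (h.x_xi _)
    simp only [dxi, mul_neg, ← mul_assoc, h.x_xi, one_mul, neg_add_cancel]
  · intro j
    rw [utri_mul, one_utri]
    refine utri_congr (h.xi_x _) ?_ (h.xi_x _)
    simp only [dxi, neg_mul, mul_assoc, h.xi_x, mul_one, add_neg_cancel]
  · intro j k
    rw [utri_mul, utri_mul]
    refine utri_congr (h.xx _ _) ?_ (h.xx _ _)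
    rcases index_cases i j with rfl | rfl | ⟨h1, h2⟩ <;>
    rcases index_cases i k with rfl | rfl | ⟨h3, h4⟩ <;>
    simp only [dx, s_lo, s_hi, s_of_ne, if_true, if_false, ne.symm, h.xi_x, *,
      ne_eq, not_false_eq_true, mul_zero, zero_mul, mul_smul_comm, smul_mul_assoc, mul_add,
      add_mul, mul_sub, sub_mul, one_mul, mul_one, mul_assoc, smul_add,
      smul_sub, add_zero, zero_add] <;>
    try module
  · intro j
    rw [utri_mul, one_utri]
    refine utri_congr (h.cc _) ?_ (h.cc _)
    rcases index_cases i j with rfl | rfl | ⟨h1, h2⟩ <;>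
    simp only [dc, s_lo, s_hi, s_of_ne, if_true, if_false, ne.symm, h.cc, *,
      ne_eq, not_false_eq_true, mul_zero, zero_mul, mul_smul_comm, smul_mul_assoc,
      mul_sub, sub_mul,
      smul_sub, add_zero] <;>
    try module
  · intro j k hjk
    rw [utri_mul, utri_mul, neg_utri]
    refine utri_congr (h.canti _ _ hjk) ?_ (hs.canti _ _ hjk)
    rcases index_cases i j with rfl | rfl | ⟨h1, h2⟩ <;>
    rcases index_cases i k with rfl | rfl | ⟨h3, h4⟩ <;>
    first | exact absurd rfl hjk | skip
    all_goals
    simp only [dc, s_lo, s_hi, s_of_ne, if_true, if_false, ne.symm, h.cc, *,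
      ne_eq, not_false_eq_true, mul_zero, zero_mul, mul_smul_comm, smul_mul_assoc,
      mul_sub, sub_mul,
      smul_sub, smul_neg, add_zero, zero_add] <;>
    try module
  · intro j
    rw [utri_mul, utri_mul]
    refine utri_congr (h.cx _) ?_ (h.cx _)
    rcases index_cases i j with rfl | rfl | ⟨h1, h2⟩ <;>
    simp only [dx, dc, dxi, s_lo, s_hi, s_of_ne, if_true, if_false, ne.symm, h.xi_x,
      h.x_xi, *, ne_eq, not_false_eq_true, mul_zero, zero_mul, mul_smul_comm, smul_mul_assoc,
      mul_add, add_mul, mul_sub, sub_mul, one_mul, mul_one, mul_neg, neg_mul, mul_assoc, smul_add,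
      smul_sub, smul_neg, add_zero, zero_add] <;>
    try module
  · intro j k hjk
    rw [utri_mul, utri_mul]
    refine utri_congr (h.cxo _ _ hjk) ?_ (hs.cxo _ _ hjk)
    rcases index_cases i j with rfl | rfl | ⟨h1, h2⟩ <;>
    rcases index_cases i k with rfl | rfl | ⟨h3, h4⟩ <;>
    first | exact absurd rfl hjk | skip
    all_goals
    simp only [dx, dc, s_lo, s_hi, s_of_ne, if_true, if_false, ne.symm,
      *, ne_eq, not_false_eq_true, mul_zero, zero_mul, mul_smul_comm, smul_mul_assoc,
      mul_add, add_mul, mul_sub, sub_mul, one_mul, mul_neg, neg_mul, mul_assoc, smul_add,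
      smul_sub, smul_neg, neg_neg, add_zero, zero_add] <;>
    try module

end CL

namespace CL

section
variable {F : Type} [Field F] {n : ℕ} (ξ : F) (i : Fin (n - 1))

/-- The skew derivation attached to `s_i`. -/
noncomputable def der : CL F n →ₗ[F] CL F n where
  toFun a := lift (F := F) (isCL_utri ξ i) a 0 1
  map_add' a b := by simp
  map_smul' r a := by simp

theorem lift_utri (a : CL F n) :
    lift (F := F) (isCL_utri ξ i) a = !![a, der ξ i a; 0, perm (s i) a] := by
  have key : lift (F := F) (isCL_utri ξ i) a 0 0 = a ∧ lift (F := F) (isCL_utri ξ i) a 1 0 = 0 ∧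
      lift (F := F) (isCL_utri ξ i) a 1 1 = perm (s i) a := by
    induction a using induction with
    | hs r => simp [Matrix.algebraMap_matrix_apply]
    | hx j => simp
    | hxi j => simp
    | hc j => simp
    | hmul a b ha hb => simp [Matrix.mul_apply, ha, hb]
    | hadd a b ha hb => simp [ha, hb]
  ext k l
  fin_cases k <;> fin_cases l
  · exact key.1
  · rfl
  · exact key.2.1
  · exact key.2.2

theorem der_mul (a b : CL F n) :
    der ξ i (a * b) = a * der ξ i b + der ξ i a * perm (s i) b := by
  have := congrFun (congrFun (map_mul (lift (F := F) (isCL_utri ξ i)) a b) 0) 1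
  rw [lift_utri, lift_utri, lift_utri, utri_mul] at this
  simpa using this

@[simp] theorem der_algebraMap (r : F) : der ξ i (algebraMap F (CL F n) r) = 0 := by
  simp [der, Matrix.algebraMap_matrix_apply]

theorem der_gx (j : Fin n) : der ξ i (gx F j) = dx ξ i j := by simp [der]
theorem der_gc (j : Fin n) : der ξ i (gc F j) = dc ξ i j := by simp [der]
end

section
variable {F : Type} [Field F] {n : ℕ} {R : Type} [Ring R] [Algebra F R]

/-- The commutation rule with an element `t` holds as soon as it holds on generators. -/
theorem mul_of_isTwist {ξ : F} {x xi c : Fin n → R} (h : IsCL x xi c) {i : Fin (n - 1)} {t : R}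
    (ht : IsTwist ξ x c i t) (a : CL F n) :
    lift h a * t = t * lift h (perm (s i) a) + lift h (der ξ i a) := by
  have hx (j : Fin n) : x j * t = t * x (s i j) + lift h (dx ξ i j) := by
    rcases index_cases i j with rfl | rfl | ⟨h1, h2⟩
    · simp [dx, s_lo, ht.x_lo]
    · simp [dx, s_hi, ht.x_hi, (lo_ne_hi i).symm]
    · simp [dx, s_of_ne, ht.xo, h1, h2]
  induction a using induction with
  | hs r => simp [Algebra.commutes]
  | hx j => simp [der_gx, hx]
  | hxi j =>
    have e : der ξ i (gxi F j) = -(gxi F j * dx ξ i j * gxi F (s i j)) := by simp [der, dxi]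
    rw [e]
    simp only [perm_gxi, lift_gxi, map_neg, map_mul]
    have := congrArg (fun z => xi j * z * xi (s i j)) (hx j)
    simp only [mul_add, add_mul, ← mul_assoc, h.xi_x, one_mul] at this
    rw [mul_assoc (xi j * t), h.x_xi, mul_one] at this
    rw [this]; abel
  | hc j =>
    rcases index_cases i j with rfl | rfl | ⟨h1, h2⟩
    · simp [der_gc, dc, s_lo, ht.c_lo]
    · simp [der_gc, dc, s_hi, ht.c_hi, (lo_ne_hi i).symm]
    · simp [der_gc, dc, s_of_ne, ht.co, h1, h2]
  | hmul a b ha hb =>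
    rw [map_mul, mul_assoc, hb, mul_add, ← mul_assoc, ha, der_mul]
    simp only [map_mul, map_add, add_mul, mul_assoc]
    abel
  | hadd a b ha hb =>
    rw [map_add, add_mul, ha, hb]
    simp only [map_add, mul_add]
    abel

theorem exists_commute (f : CL F n →ₐ[F] R) {g : R}
    (hg : ∀ j, ∃ k, f (gx F j) * g = g * f (gx F k) ∧ f (gc F j) * g = g * f (gc F k))
    (a : CL F n) : ∃ a', f a * g = g * f a' := by
  induction a using induction with
  | hs r => exact ⟨algebraMap F _ r, by simp [Algebra.commutes]⟩
  | hx j => exact (hg j).imp' _ fun k hk => hk.1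
  | hxi j =>
    obtain ⟨k, hk, -⟩ := hg j
    refine ⟨gxi F k, inv_mul_comm_of ?_ ?_ hk⟩
    · rw [← map_mul, (isCL F).xi_x, map_one]
    · rw [← map_mul, (isCL F).x_xi, map_one]
  | hc j => exact (hg j).imp' _ fun k hk => hk.2
  | hmul a b ha hb =>
    obtain ⟨a', ha⟩ := ha
    obtain ⟨b', hb⟩ := hb
    exact ⟨a' * b', by rw [map_mul, mul_assoc, hb, ← mul_assoc, ha, mul_assoc, map_mul]⟩
  | hadd a b ha hb =>
    obtain ⟨a', ha⟩ := ha
    obtain ⟨b', hb⟩ := hb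
    exact ⟨a' + b', by rw [map_add, add_mul, ha, hb, map_add, mul_add]⟩
end

end CL

/-! ### A faithful right representation -/

section
variable {F : Type} [Field F] {n : ℕ}

theorem s_braid {i j : Fin (n - 1)} (h : (j : ℕ) = i + 1) :
    s i * s j * s i = s j * s i * s j := by
  have e : lo j = hi i := Fin.ext h
  have n1 : lo i ≠ hi i := lo_ne_hi i
  have n2 : lo i ≠ hi j := by simp [hi, lo, Fin.ext_iff]; omega
  have n3 : hi i ≠ hi j := by simp [hi, Fin.ext_iff]; omega
  simp only [s, e]
  rw [swap_mul_swap_mul_swap n1 n2, swap_comm (lo i) (hi i), swap_comm (hi i) (hi j),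
    swap_mul_swap_mul_swap n3.symm n2.symm, swap_comm]

theorem s_far {i j : Fin (n - 1)} (h : (i : ℕ) + 1 < j) : s i * s j = s j * s i := by
  have n1 : lo i ≠ lo j := by simp [lo, Fin.ext_iff]; omega
  have n2 : lo i ≠ hi j := by simp [lo, hi, Fin.ext_iff]; omega
  have n3 : hi i ≠ lo j := by simp [lo, hi, Fin.ext_iff]; omega
  have n4 : hi i ≠ hi j := by simp [hi, Fin.ext_iff]; omega
  refine ((Perm.disjoint_iff_eq_or_eq (f := s i) (g := s j)).2 fun x => ?_).commute
  rcases index_cases i x with rfl | rfl | ⟨h1, h2⟩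
  · exact .inr (s_of_ne j n1 n2)
  · exact .inr (s_of_ne j n3 n4)
  · exact .inl (s_of_ne i h1 h2)

/-- The space of the right regular representation of `H_n`. -/
abbrev RegRep (F : Type) [Field F] (n : ℕ) : Type := Perm (Fin n) → CL F n

/-- Right multiplication by elements of the Clifford–Laurent algebra. -/
noncomputable def rightMul : CL F n →ₐ[F] (Module.End F (RegRep F n))ᵐᵒᵖ where
  toFun a := op
    { toFun := fun f w => f w * a
      map_add' := fun f g => by ext w; simp [add_mul]
      map_smul' := fun r f => by ext w; simp }
  map_one' := by apply unop_injective; ext; simp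
  map_mul' a b := by apply unop_injective; ext; simp [mul_assoc]
  map_zero' := by apply unop_injective; ext; simp
  map_add' a b := by apply unop_injective; ext; simp [mul_add]
  commutes' r := by apply unop_injective; ext; simp [← Algebra.commutes, Algebra.smul_def]

theorem rightMul_apply (a : CL F n) (f : RegRep F n) (w : Perm (Fin n)) :
    (rightMul a).unop f w = f w * a := rfl

/-- Right multiplication by `T_i`. -/
noncomputable def rightT (ξ : F) (i : Fin (n - 1)) : (Module.End F (RegRep F n))ᵐᵒᵖ := op
  { toFun := fun f w => CL.perm (s i) (f (w * s i)) +
      (if w (hi i) < w (lo i) then ξ • CL.perm (s i) (f w) else 0) + CL.der ξ i (f w)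
    map_add' := fun f g => by
      ext w; simp only [Pi.add_apply, map_add, smul_add]; split_ifs <;> abel
    map_smul' := fun r f => by
      ext w
      simp only [Pi.smul_apply, map_smul, RingHom.id_apply, smul_add, smul_ite, smul_zero]
      rw [smul_comm] }

theorem rightT_apply (ξ : F) (i : Fin (n - 1)) (f : RegRep F n) (w : Perm (Fin n)) :
    (rightT ξ i).unop f w = CL.perm (s i) (f (w * s i)) +
      (if w (hi i) < w (lo i) then ξ • CL.perm (s i) (f w) else 0) + CL.der ξ i (f w) := rfl

theorem rightMul_mul_rightT (ξ : F) (i : Fin (n - 1)) (a : CL F n) :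
    rightMul a * rightT ξ i
      = rightT ξ i * rightMul (CL.perm (s i) a) + rightMul (CL.der ξ i a) := by
  apply unop_injective
  refine LinearMap.ext fun f => funext fun w => ?_
  simp only [unop_mul, unop_add, Module.End.mul_apply, LinearMap.add_apply, Pi.add_apply,
    rightMul_apply, rightT_apply, map_mul, CL.der_mul, add_mul, ite_mul, zero_mul,
    smul_mul_assoc]
  abel

theorem isCL_rightMul : IsCL (fun j => rightMul (CL.gx F (n := n) j))
    (fun j => rightMul (CL.gxi F j)) (fun j => rightMul (CL.gc F j)) where
  x_xi j := by rw [← map_mul, (CL.isCL F).x_xi, map_one]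
  xi_x j := by rw [← map_mul, (CL.isCL F).xi_x, map_one]
  xx j k := by rw [← map_mul, (CL.isCL F).xx, map_mul]
  cc j := by rw [← map_mul, (CL.isCL F).cc, map_one]
  canti j k h := by rw [← map_mul, (CL.isCL F).canti j k h, map_neg, map_mul]
  cx j := by rw [← map_mul, (CL.isCL F).cx, map_mul]
  cxo j k h := by rw [← map_mul, (CL.isCL F).cxo j k h, map_mul]

theorem isTwist_rightT (ξ : F) (i : Fin (n - 1)) :
    IsTwist ξ (fun j => rightMul (CL.gx F (n := n) j)) (fun j => rightMul (CL.gc F j)) i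
      (rightT ξ i) where
  x_lo := by
    rw [rightMul_mul_rightT]; simp [CL.der_gx, CL.dx, s_lo]
  x_hi := by
    rw [rightMul_mul_rightT]; simp [CL.der_gx, CL.dx, s_hi, (lo_ne_hi i).symm]
  c_lo := by
    rw [rightMul_mul_rightT]; simp [CL.der_gc, CL.dc, s_lo]
  c_hi := by
    rw [rightMul_mul_rightT]; simp [CL.der_gc, CL.dc, s_hi, (lo_ne_hi i).symm]
  xo j h1 h2 := by
    rw [rightMul_mul_rightT]; simp [CL.der_gx, CL.dx, s_of_ne, h1, h2]
  co j h1 h2 := by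
    rw [rightMul_mul_rightT]; simp [CL.der_gc, CL.dc, s_of_ne, h1, h2]

/-- Scalar-valued functions in the right regular representation. -/
noncomputable def scalarFun (g : Perm (Fin n) → F) : RegRep F n := fun w => algebraMap F _ (g w)

theorem eq_zero_of_commute {G : (Module.End F (RegRep F n))ᵐᵒᵖ}
    (hG : ∀ j, ∃ k, rightMul (CL.gx F j) * G = G * rightMul (CL.gx F k) ∧
      rightMul (CL.gc F j) * G = G * rightMul (CL.gc F k))
    (h0 : ∀ g, G.unop (scalarFun g) = 0) : G = 0 := by
  apply unop_injective
  refine LinearMap.ext fun f => ?_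
  have e : f = ∑ w, (rightMul (f w)).unop (scalarFun (Pi.single w 1)) := by
    ext w
    rw [Finset.sum_apply, Finset.sum_eq_single w]
    · simp [rightMul_apply, scalarFun]
    · intro b _ hb
      simp [rightMul_apply, scalarFun, hb.symm]
    · simp
  rw [e, map_sum]
  refine Finset.sum_eq_zero fun w _ => ?_
  obtain ⟨a', ha⟩ := CL.exists_commute rightMul hG (f w)
  have := congrArg (fun z => z.unop (scalarFun (Pi.single w 1))) ha
  simpa [h0] using this

/-- Right multiplication by `T_i` on scalar-valued functions. -/
def scalarT (ξ : F) (i : Fin (n - 1)) (g : Perm (Fin n) → F) (w : Perm (Fin n)) : F :=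
  g (w * s i) + if w (hi i) < w (lo i) then ξ * g w else 0

theorem rightT_scalarFun (ξ : F) (i : Fin (n - 1)) (g : Perm (Fin n) → F) :
    (rightT ξ i).unop (scalarFun g) = scalarFun (scalarT ξ i g) := by
  ext w
  simp only [rightT_apply, scalarFun, scalarT, AlgHom.commutes, CL.der_algebraMap, add_zero,
    map_add]
  split_ifs <;> simp [Algebra.smul_def]

theorem scalarT_quad (ξ : F) (i : Fin (n - 1)) (g : Perm (Fin n) → F) :
    scalarT ξ i (scalarT ξ i g) = ξ • scalarT ξ i g + g := by
  ext w
  have hne : w (lo i) ≠ w (hi i) := w.injective.ne (lo_ne_hi i)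
  simp only [scalarT, Pi.add_apply, Pi.smul_apply, smul_eq_mul, Perm.mul_apply, s_lo, s_hi,
    mul_assoc, s_mul_s, mul_one]
  rcases lt_or_gt_of_ne hne with h | h
  · simp only [h, h.not_gt, if_true, if_false]; ring
  · simp only [h, h.not_gt, if_true, if_false]; ring

theorem scalarT_far (ξ : F) {i j : Fin (n - 1)} (hij : (i : ℕ) + 1 < j)
    (g : Perm (Fin n) → F) :
    scalarT ξ i (scalarT ξ j g) = scalarT ξ j (scalarT ξ i g) := by
  ext w
  have n1 : lo i ≠ lo j := by simp [lo, Fin.ext_iff]; omega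
  have n2 : lo i ≠ hi j := by simp [lo, hi, Fin.ext_iff]; omega
  have n3 : hi i ≠ lo j := by simp [lo, hi, Fin.ext_iff]; omega
  have n4 : hi i ≠ hi j := by simp [hi, Fin.ext_iff]; omega
  simp only [scalarT, Perm.mul_apply, mul_assoc, s_far hij, s_of_ne i n1.symm n3.symm,
    s_of_ne i n2.symm n4.symm, s_of_ne j n1 n2, s_of_ne j n3 n4]
  split_ifs <;> ring

theorem scalarT_braid (ξ : F) {i j : Fin (n - 1)} (hij : (j : ℕ) = i + 1)
    (g : Perm (Fin n) → F) :
    scalarT ξ i (scalarT ξ j (scalarT ξ i g)) = scalarT ξ j (scalarT ξ i (scalarT ξ j g)) := by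
  ext w
  have e : lo j = hi i := Fin.ext hij
  have n1 : hi j ≠ lo i := by simp [hi, lo, Fin.ext_iff]; omega
  have n2 : hi j ≠ hi i := by simp [hi, Fin.ext_iff]; omega
  have n3 : lo i ≠ lo j := by simp [lo, Fin.ext_iff]; omega
  have b := s_braid hij
  rw [mul_assoc, mul_assoc] at b
  have sj1 : s j (hi i) = hi j := e ▸ s_lo j
  have sj2 : s j (hi j) = hi i := e ▸ s_hi j
  have sj3 : s j (lo i) = lo i := s_of_ne j n3 n1.symm
  have si3 : s i (hi j) = hi j := s_of_ne i n1 n2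
  have m1 : w (lo i) ≠ w (hi i) := w.injective.ne (lo_ne_hi i)
  have m2 : w (lo i) ≠ w (hi j) := w.injective.ne n1.symm
  have m3 : w (hi i) ≠ w (hi j) := w.injective.ne n2.symm
  simp only [scalarT, Perm.mul_apply, mul_assoc, e, s_lo, s_hi, sj1, sj2, sj3, si3, b, s_mul_s,
    mul_one]
  rcases lt_or_gt_of_ne m1 with h1 | h1 <;> rcases lt_or_gt_of_ne m2 with h2 | h2 <;>
  rcases lt_or_gt_of_ne m3 with h3 | h3 <;>
  first
  | exact absurd (h1.trans h3) h2.not_gt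
  | exact absurd (h3.trans h1) h2.not_gt
  | (simp only [h1, h2, h3, h1.not_gt, h2.not_gt, h3.not_gt, if_true, if_false] <;> ring)

theorem rightT_quad (ξ : F) (i : Fin (n - 1)) :
    rightT (n := n) ξ i * rightT ξ i = ξ • rightT ξ i + 1 := by
  rw [← sub_eq_zero, ← sub_sub]
  refine eq_zero_of_commute (fun j => ⟨j, (isTwist_rightT ξ i).quad_x isCL_rightMul j,
    (isTwist_rightT ξ i).quad_c j⟩) fun g => ?_
  have := scalarT_quad ξ i g
  simp only [unop_sub, unop_mul, unop_smul, unop_one, LinearMap.sub_apply, Module.End.mul_apply,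
    LinearMap.smul_apply, Module.End.one_apply, rightT_scalarFun, this]
  ext w
  simp [scalarFun, Algebra.smul_def]

theorem rightT_far (ξ : F) {i j : Fin (n - 1)} (hij : (i : ℕ) + 1 < j) :
    rightT (n := n) ξ i * rightT ξ j = rightT ξ j * rightT ξ i := by
  rw [← sub_eq_zero]
  refine eq_zero_of_commute ((isTwist_rightT ξ i).far (isTwist_rightT ξ j) hij) fun g => ?_
  simp only [unop_sub, unop_mul, LinearMap.sub_apply, Module.End.mul_apply, rightT_scalarFun,
    scalarT_far ξ hij, sub_self]

theorem rightT_braid (ξ : F) {i j : Fin (n - 1)} (hij : (j : ℕ) = i + 1) :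
    rightT (n := n) ξ i * rightT ξ j * rightT ξ i = rightT ξ j * rightT ξ i * rightT ξ j := by
  rw [← sub_eq_zero]
  refine eq_zero_of_commute ((isTwist_rightT ξ i).braid isCL_rightMul (isTwist_rightT ξ j) hij
    (rightT_quad ξ i) (rightT_quad ξ j)) fun g => ?_
  simp only [unop_sub, unop_mul, LinearMap.sub_apply, Module.End.mul_apply, rightT_scalarFun,
    scalarT_braid ξ hij, sub_self]

end

/-! ### The basis theorem -/

section
variable {F : Type} [Field F] (q : F) {n : ℕ}

theorem T_quad (i : Fin (n - 1)) : T F q i * T F q i = (q - q⁻¹) • T F q i + 1 := by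
  have := RingQuot.mkAlgHom_rel F (Rel.Tquad (q := q) i)
  rwa [map_mul, map_add, map_smul, map_one] at this

theorem T_braid {i j : Fin (n - 1)} (h : (j : ℕ) = i + 1) :
    T F q i * T F q j * T F q i = T F q j * T F q i * T F q j := by
  have := RingQuot.mkAlgHom_rel F (Rel.Tbraid (q := q) i j h)
  rwa [map_mul, map_mul, map_mul, map_mul] at this

theorem T_far {i j : Fin (n - 1)} (h : (i : ℕ) + 1 < j) :
    T F q i * T F q j = T F q j * T F q i := by
  have := RingQuot.mkAlgHom_rel F (Rel.TTfar (q := q) i j h)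
  rwa [map_mul, map_mul] at this

theorem isCL_H : IsCL (X F q (n := n)) (Xinv F q) (C F q) where
  x_xi j := by
    have := RingQuot.mkAlgHom_rel F (Rel.XXinv (q := q) j); rwa [map_mul, map_one] at this
  xi_x j := by
    have := RingQuot.mkAlgHom_rel F (Rel.XinvX (q := q) j); rwa [map_mul, map_one] at this
  xx j k := by
    have := RingQuot.mkAlgHom_rel F (Rel.XX (q := q) j k); rwa [map_mul, map_mul] at this
  cc j := by
    have := RingQuot.mkAlgHom_rel F (Rel.CC (q := q) j); rwa [map_mul, map_one] at this
  canti j k h := by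
    have := RingQuot.mkAlgHom_rel F (Rel.Canti (q := q) j k h)
    rwa [map_mul, map_neg, map_mul] at this
  cx j := by
    have := RingQuot.mkAlgHom_rel F (Rel.CX (q := q) j); rwa [map_mul, map_mul] at this
  cxo j k h := by
    have := RingQuot.mkAlgHom_rel F (Rel.CXo (q := q) j k h); rwa [map_mul, map_mul] at this

theorem isTwist_H (i : Fin (n - 1)) :
    IsTwist (q - q⁻¹) (X F q (n := n)) (C F q) i (T F q i) := by
  refine IsTwist.of_rel (isCL_H q) (T_quad q i) ?_ (fun j h1 h2 => ?_) (fun j h1 h2 => ?_) ?_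
  · have := RingQuot.mkAlgHom_rel F (Rel.TC (q := q) i); rwa [map_mul, map_mul] at this
  · have := RingQuot.mkAlgHom_rel F (Rel.TCo (q := q) i j h1 h2); rwa [map_mul, map_mul] at this
  · have := RingQuot.mkAlgHom_rel F (Rel.TXo (q := q) i j h1 h2); rwa [map_mul, map_mul] at this
  · have := RingQuot.mkAlgHom_rel F (Rel.cross (q := q) i)
    rwa [map_mul, map_mul, map_add, map_smul, map_mul] at this

/-- The canonical morphism from the Clifford–Laurent algebra to `H_n`. -/
noncomputable def ofCL : CL F n →ₐ[F] H F q n := CL.lift (isCL_H q)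

@[simp] theorem ofCL_gx (j : Fin n) : ofCL q (CL.gx F j) = X F q j := CL.lift_gx _ _
@[simp] theorem ofCL_gxi (j : Fin n) : ofCL q (CL.gxi F j) = Xinv F q j := CL.lift_gxi _ _
@[simp] theorem ofCL_gc (j : Fin n) : ofCL q (CL.gc F j) = C F q j := CL.lift_gc _ _

theorem ofCL_mul_T (i : Fin (n - 1)) (a : CL F n) :
    ofCL q a * T F q i
      = T F q i * ofCL q (CL.perm (s i) a) + ofCL q (CL.der (q - q⁻¹) i a) :=
  CL.mul_of_isTwist (isCL_H q) (isTwist_H q i) a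

/-- The images of the generators in the right regular representation. -/
noncomputable def regGen : Gen n → (Module.End F (RegRep F n))ᵐᵒᵖ
  | .X j => rightMul (CL.gx F j)
  | .Xinv j => rightMul (CL.gxi F j)
  | .C j => rightMul (CL.gc F j)
  | .T i => rightT (q - q⁻¹) i

theorem regGen_rel {a b : FA F n} (hab : Rel F q n a b) :
    FreeAlgebra.lift F (regGen q) a = FreeAlgebra.lift F (regGen q) b := by
  have h := isCL_rightMul (F := F) (n := n)
  have ht := isTwist_rightT (n := n) (q - q⁻¹)
  have hq := rightT_quad (n := n) (q - q⁻¹)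
  have hb := fun i j => rightT_braid (n := n) (q - q⁻¹) (i := i) (j := j)
  have hf := fun i j => rightT_far (n := n) (q - q⁻¹) (i := i) (j := j)
  have lX (j : Fin n) : FreeAlgebra.lift F (regGen q) (fx F j) = rightMul (CL.gx F j) :=
    FreeAlgebra.lift_ι_apply _ _
  have lXi (j : Fin n) : FreeAlgebra.lift F (regGen q) (fxinv F j) = rightMul (CL.gxi F j) :=
    FreeAlgebra.lift_ι_apply _ _
  have lC (j : Fin n) : FreeAlgebra.lift F (regGen q) (fc F j) = rightMul (CL.gc F j) :=
    FreeAlgebra.lift_ι_apply _ _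
  have lT (j : Fin (n - 1)) : FreeAlgebra.lift F (regGen q) (ft F j) = rightT (q - q⁻¹) j :=
    FreeAlgebra.lift_ι_apply _ _
  cases hab with
  | XXinv i => rw [map_mul, map_one, lX, lXi]; exact h.x_xi i
  | XinvX i => rw [map_mul, map_one, lX, lXi]; exact h.xi_x i
  | XX i j => rw [map_mul, map_mul, lX, lX]; exact h.xx i j
  | XiXi i j => rw [map_mul, map_mul, lXi, lXi]; exact h.xixi i j
  | XXi i j _ => rw [map_mul, map_mul, lX, lXi]; exact h.xxi i j
  | CC i => rw [map_mul, map_one, lC]; exact h.cc i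
  | Canti i j hij => rw [map_mul, map_neg, map_mul, lC, lC]; exact h.canti i j hij
  | CX i => rw [map_mul, map_mul, lC, lX, lXi]; exact h.cx i
  | CXi i => rw [map_mul, map_mul, lC, lX, lXi]; exact h.cxi i
  | CXo i j hij => rw [map_mul, map_mul, lC, lX]; exact h.cxo i j hij
  | CXio i j hij => rw [map_mul, map_mul, lC, lXi]; exact h.cxio i j hij
  | Tquad i => rw [map_mul, map_add, map_smul, map_one, lT]; exact hq i
  | Tbraid i j hij =>
    rw [map_mul, map_mul, map_mul, map_mul, lT, lT]; exact hb i j hij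
  | TTfar i j hij => rw [map_mul, map_mul, lT, lT]; exact hf i j hij
  | TC i => rw [map_mul, map_mul, lT, lC, lC]; exact (ht i).c_hi.symm
  | TCo i j h1 h2 => rw [map_mul, map_mul, lT, lC]; exact ((ht i).co j h1 h2).symm
  | TXo i j h1 h2 => rw [map_mul, map_mul, lT, lX]; exact ((ht i).xo j h1 h2).symm
  | TXio i j h1 h2 =>
    rw [map_mul, map_mul, lT, lXi]
    exact (inv_mul_comm_of (h.xi_x j) (h.x_xi j) ((ht i).xo j h1 h2)).symm
  | cross i =>
    rw [map_mul, map_mul, map_add, map_smul, map_mul, lT, lC, lC, lX, lX]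
    have := IsTwist.cross h (ht i) (hq i)
    beta_reduce at this
    convert this using 1

/-- The right regular representation of `H_n`. -/
noncomputable def regRep : H F q n →ₐ[F] (Module.End F (RegRep F n))ᵐᵒᵖ :=
  RingQuot.liftAlgHom F ⟨FreeAlgebra.lift F (regGen q), fun _ _ => regGen_rel q⟩

theorem regRep_gen (g : Gen n) :
    regRep q (RingQuot.mkAlgHom F (Rel F q n) (FreeAlgebra.ι F g)) = regGen q g :=
  (RingQuot.liftAlgHom_mkAlgHom_apply F _ _ _).trans (FreeAlgebra.lift_ι_apply _ _)

theorem regRep_T (i : Fin (n - 1)) : regRep q (T F q i) = rightT (q - q⁻¹) i :=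
  regRep_gen q (.T i)

theorem regRep_ofCL (a : CL F n) : regRep q (ofCL q a) = rightMul a := by
  have : (regRep q).comp (ofCL q) = rightMul (F := F) (n := n) := by
    refine CL.hom_ext (fun j => ?_) (fun j => ?_) (fun j => ?_) <;> simp only [AlgHom.comp_apply]
    · rw [ofCL_gx]; exact regRep_gen q (.X j)
    · rw [ofCL_gxi]; exact regRep_gen q (.Xinv j)
    · rw [ofCL_gc]; exact regRep_gen q (.C j)
  exact DFunLike.congr_fun this a

theorem parabolicJ_univ : parabolicJ F q (Set.univ : Set (Fin (n - 1))) = ⊤ := by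
  refine eq_top_iff.2 fun h _ => ?_
  obtain ⟨a, rfl⟩ := RingQuot.mkAlgHom_surjective F (Rel F q n) h
  induction a using FreeAlgebra.induction with
  | grade0 r => rw [AlgHom.commutes]; exact Subalgebra.algebraMap_mem _ r
  | grade1 g =>
    apply Algebra.subset_adjoin
    cases g with
    | X j => exact .inl (.inl (.inl ⟨j, rfl⟩))
    | Xinv j => exact .inl (.inl (.inr ⟨j, rfl⟩))
    | C j => exact .inl (.inr ⟨j, rfl⟩)
    | T j => exact .inr ⟨j, trivial, rfl⟩
  | mul a b ha hb => rw [map_mul]; exact mul_mem (ha trivial) (hb trivial)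
  | add a b ha hb => rw [map_add]; exact add_mem (ha trivial) (hb trivial)

open Classical in
/-- The standard element `T_w`. -/
noncomputable def Tw (w : Perm (Fin n)) : H F q n :=
  if h : ∃ i : Fin (n - 1), w (hi i) < w (lo i) then Tw (w * s h.choose) * T F q h.choose else 1
termination_by len w
decreasing_by exact len_mul_s_lt _ h.choose_spec

theorem Tw_one : Tw q (1 : Perm (Fin n)) = 1 := by
  rw [Tw, dif_neg]
  rintro ⟨i, hi⟩
  exact (lo_lt_hi i).not_gt hi

theorem Tw_of_descent (w : Perm (Fin n)) (i : Fin (n - 1)) (h : w (hi i) < w (lo i)) :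
    Tw q w = Tw q (w * s i) * T F q i := by
  induction hN : len w using Nat.strong_induction_on generalizing w i with
  | _ N ih =>
  subst hN
  have far (i j : Fin (n - 1)) (hij : (i : ℕ) + 1 < j) (h1 : w (hi i) < w (lo i))
      (h2 : w (hi j) < w (lo j)) :
      Tw q (w * s i) * T F q i = Tw q (w * s j) * T F q j := by
    have n1 : lo i ≠ lo j := by simp [lo, Fin.ext_iff]; omega
    have n2 : lo i ≠ hi j := by simp [lo, hi, Fin.ext_iff]; omega
    have n3 : hi i ≠ lo j := by simp [lo, hi, Fin.ext_iff]; omega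
    have n4 : hi i ≠ hi j := by simp [hi, Fin.ext_iff]; omega
    rw [ih _ (len_mul_s_lt _ h1) (w * s i) j (by
        rwa [Perm.mul_apply, Perm.mul_apply, s_of_ne i n1.symm n3.symm,
          s_of_ne i n2.symm n4.symm]) rfl,
      ih _ (len_mul_s_lt _ h2) (w * s j) i (by
        rwa [Perm.mul_apply, Perm.mul_apply, s_of_ne j n1 n2, s_of_ne j n3 n4]) rfl,
      mul_assoc, mul_assoc _ (T F q i), mul_assoc w, mul_assoc w, s_far hij, T_far q hij]
  have adj (i j : Fin (n - 1)) (hij : (j : ℕ) = i + 1) (h1 : w (hi i) < w (lo i))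
      (h2 : w (hi j) < w (lo j)) :
      Tw q (w * s i) * T F q i = Tw q (w * s j) * T F q j := by
    have e : lo j = hi i := Fin.ext hij
    have n1 : hi j ≠ lo i := by simp [hi, lo, Fin.ext_iff]; omega
    have n2 : hi j ≠ hi i := by simp [hi, Fin.ext_iff]; omega
    have n3 : lo i ≠ lo j := by simp [lo, Fin.ext_iff]; omega
    have sj1 : s j (hi i) = hi j := e ▸ s_lo j
    have sj2 : s j (hi j) = hi i := e ▸ s_hi j
    have sj3 : s j (lo i) = lo i := s_of_ne j n3 n1.symm
    have si3 : s i (hi j) = hi j := s_of_ne i n1 n2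
    rw [e] at h2
    have d1 : (w * s i) (hi j) < (w * s i) (lo j) := by
      simpa only [Perm.mul_apply, e, si3, s_hi] using h2.trans h1
    have d2 : (w * s i * s j) (hi i) < (w * s i * s j) (lo i) := by
      simpa only [Perm.mul_apply, e, si3, s_lo, sj1, sj3] using h2
    have d3 : (w * s j) (hi i) < (w * s j) (lo i) := by
      simpa only [Perm.mul_apply, e, sj1, sj3, s_hi] using h2.trans h1
    have d4 : (w * s j * s i) (hi j) < (w * s j * s i) (lo j) := by
      simpa only [Perm.mul_apply, e, si3, s_hi, sj2, sj3] using h1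
    have h2' : w (hi j) < w (lo j) := by rwa [e]
    rw [ih _ (len_mul_s_lt _ h1) _ j d1 rfl,
      ih _ ((len_mul_s_lt _ d1).trans (len_mul_s_lt _ h1)) _ i d2 rfl,
      ih _ (len_mul_s_lt _ h2') _ i d3 rfl,
      ih _ ((len_mul_s_lt _ d3).trans (len_mul_s_lt _ h2')) _ j d4 rfl]
    have b := s_braid hij
    have t := T_braid q hij
    simp only [mul_assoc] at b t ⊢
    rw [b, t]
  have hex : ∃ i : Fin (n - 1), w (hi i) < w (lo i) := ⟨i, h⟩
  rw [Tw, dif_pos hex]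
  have h' := hex.choose_spec
  generalize hex.choose = j at h'
  rcases lt_trichotomy (i : ℕ) j with hij | hij | hij
  · rcases (Nat.succ_le_of_lt hij).eq_or_lt with hij | hij
    · exact (adj i j hij.symm h h').symm
    · exact (far i j hij h h').symm
  · rw [Fin.ext hij]
  · rcases (Nat.succ_le_of_lt hij).eq_or_lt with hij | hij
    · exact adj j i hij.symm h' h
    · exact far j i hij h' h

theorem Tw_mul_T_of_lt {w : Perm (Fin n)} {i : Fin (n - 1)} (h : w (lo i) < w (hi i)) :
    Tw q w * T F q i = Tw q (w * s i) := by
  rw [Tw_of_descent q (w * s i) i, mul_s_mul_s]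
  simpa only [Perm.mul_apply, s_lo, s_hi] using h

theorem Tw_mul_T_of_gt {w : Perm (Fin n)} {i : Fin (n - 1)} (h : w (hi i) < w (lo i)) :
    Tw q w * T F q i = Tw q (w * s i) + (q - q⁻¹) • Tw q w := by
  conv_lhs => rw [Tw_of_descent q w i h, mul_assoc, T_quad, mul_add, mul_one, mul_smul_comm]
  rw [← Tw_of_descent q w i h, add_comm]

theorem Tw_s (i : Fin (n - 1)) : Tw q (s i) = T F q i := by
  have := Tw_mul_T_of_lt q (w := 1) (i := i) (lo_lt_hi i)
  rw [Tw_one, one_mul, one_mul] at this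
  exact this.symm

theorem Tw_mul {u v : Perm (Fin n)} (h : IsReducedMul u v) : Tw q u * Tw q v = Tw q (u * v) := by
  induction hN : len v using Nat.strong_induction_on generalizing v with
  | _ N ih =>
  subst hN
  by_cases hv : v = 1
  · rw [hv, Tw_one, mul_one, mul_one]
  obtain ⟨i, hi⟩ := exists_descent hv
  have h' := h _ _ (lo_lt_hi i) hi
  rw [Tw_of_descent q v i hi, ← mul_assoc, ih _ (len_mul_s_lt _ hi) (h.mul_s hi) rfl,
    Tw_of_descent q (u * v) i h', mul_assoc u]

/-- The coordinates of an element of `H_n` in the basis `T_w`. -/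
noncomputable def coordH : H F q n →ₗ[F] RegRep F n where
  toFun h := (regRep q h).unop (scalarFun (Pi.single 1 1))
  map_add' a b := by simp
  map_smul' r a := by simp

theorem regRep_Tw (w : Perm (Fin n)) :
    coordH q (Tw q w) = scalarFun (Pi.single w 1) := by
  induction hN : len w using Nat.strong_induction_on generalizing w with
  | _ N ih =>
  subst hN
  by_cases hw : w = 1
  · subst hw; simp [coordH, Tw_one]
  obtain ⟨i, hi'⟩ := exists_descent hw
  have e := ih _ (len_mul_s_lt _ hi') _ rfl
  simp only [coordH, LinearMap.coe_mk, AddHom.coe_mk] at e ⊢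
  rw [Tw_of_descent q w i hi', map_mul, unop_mul, Module.End.mul_apply, e, regRep_T,
    rightT_scalarFun]
  congr 1
  ext v
  have h1 : v * s i = w * s i ↔ v = w := mul_left_inj _
  simp only [scalarT, Pi.single_apply, h1]
  by_cases hv : v = w * s i
  · subst hv
    simp [Perm.mul_apply, s_lo, s_hi, hi'.not_gt]
  · simp [hv]

theorem coordH_Tw_mul (w : Perm (Fin n)) (a : CL F n) :
    coordH q (Tw q w * ofCL q a) = Pi.single w a := by
  have e := regRep_Tw q w
  simp only [coordH, LinearMap.coe_mk, AddHom.coe_mk] at e ⊢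
  rw [map_mul, unop_mul, Module.End.mul_apply, e, regRep_ofCL]
  ext v
  by_cases hv : v = w
  · subst hv; simp [rightMul_apply, scalarFun]
  · simp [rightMul_apply, scalarFun, hv]

/-- The span of the elements `T_w a` with `w ∈ A` and `a` in the Clifford–Laurent algebra. -/
noncomputable def twSpan (A : Set (Perm (Fin n))) : Submodule F (H F q n) :=
  Submodule.span F {h | ∃ w ∈ A, ∃ a, h = Tw q w * ofCL q a}

theorem mem_twSpan {A : Set (Perm (Fin n))} {w : Perm (Fin n)} (hw : w ∈ A) (a : CL F n) :
    Tw q w * ofCL q a ∈ twSpan q A :=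
  Submodule.subset_span ⟨w, hw, a, rfl⟩

theorem Tw_mem_twSpan {A : Set (Perm (Fin n))} {w : Perm (Fin n)} (hw : w ∈ A) :
    Tw q w ∈ twSpan q A := by
  simpa using mem_twSpan q hw 1

theorem twSpan_mul_ofCL {A : Set (Perm (Fin n))} {h : H F q n} (hh : h ∈ twSpan q A)
    (a : CL F n) : h * ofCL q a ∈ twSpan q A := by
  induction hh using Submodule.span_induction with
  | mem h hh =>
    obtain ⟨w, hw, b, rfl⟩ := hh
    rw [mul_assoc, ← map_mul]
    exact mem_twSpan q hw _
  | zero => rw [zero_mul]; exact zero_mem _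
  | add x y _ _ hx hy => rw [add_mul]; exact add_mem hx hy
  | smul r x _ hx => rw [smul_mul_assoc]; exact Submodule.smul_mem _ _ hx

theorem twSpan_mul_T {A B : Set (Perm (Fin n))} {h : H F q n} (hh : h ∈ twSpan q A)
    {i : Fin (n - 1)} (hA : A ⊆ B) (hB : ∀ w ∈ A, w * s i ∈ B) : h * T F q i ∈ twSpan q B := by
  induction hh using Submodule.span_induction with
  | mem h hh =>
    obtain ⟨w, hw, b, rfl⟩ := hh
    rw [mul_assoc, ofCL_mul_T, mul_add, ← mul_assoc]
    refine add_mem (twSpan_mul_ofCL q ?_ _) (mem_twSpan q (hA hw) _)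
    rcases lt_or_gt_of_ne (w.injective.ne (lo_ne_hi i)) with h | h
    · rw [Tw_mul_T_of_lt q h]
      exact Tw_mem_twSpan q (hB w hw)
    · rw [Tw_mul_T_of_gt q h]
      exact add_mem (Tw_mem_twSpan q (hB w hw)) (Submodule.smul_mem _ _ (Tw_mem_twSpan q (hA hw)))
  | zero => rw [zero_mul]; exact zero_mem _
  | add x y _ _ hx hy => rw [add_mul]; exact add_mem hx hy
  | smul r x _ hx => rw [smul_mul_assoc]; exact Submodule.smul_mem _ _ hx

theorem mem_twSpan_of_mem_parabolicJ {J : Set (Fin (n - 1))} {A : Set (Perm (Fin n))}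
    (h1 : 1 ∈ A) (hJ : ∀ w ∈ A, ∀ j ∈ J, w * s j ∈ A) {h : H F q n}
    (hh : h ∈ parabolicJ F q J) : h ∈ twSpan q A := by
  have key : ∀ g ∈ twSpan q A, g * h ∈ twSpan q A := by
    induction hh using Algebra.adjoin_induction with
    | mem h hh =>
      intro g hg
      rcases hh with ((⟨j, rfl⟩ | ⟨j, rfl⟩) | ⟨j, rfl⟩) | ⟨j, hj, rfl⟩
      · have := twSpan_mul_ofCL q hg (CL.gx F j); rwa [ofCL_gx] at this
      · have := twSpan_mul_ofCL q hg (CL.gxi F j); rwa [ofCL_gxi] at this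
      · have := twSpan_mul_ofCL q hg (CL.gc F j); rwa [ofCL_gc] at this
      · exact twSpan_mul_T q hg subset_rfl fun w hw => hJ w hw j hj
    | algebraMap r =>
      intro g hg
      rw [← Algebra.commutes, ← Algebra.smul_def]
      exact Submodule.smul_mem _ _ hg
    | add x y _ _ hx hy =>
      intro g hg
      rw [mul_add]
      exact add_mem (hx g hg) (hy g hg)
    | mul x y _ _ hx hy =>
      intro g hg
      rw [← mul_assoc]
      exact hy _ (hx g hg)
  simpa using key 1 (by simpa [Tw_one] using Tw_mem_twSpan q h1)

theorem twSpan_univ : twSpan q (Set.univ : Set (Perm (Fin n))) = ⊤ := by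
  refine eq_top_iff.2 fun h _ => mem_twSpan_of_mem_parabolicJ q (J := Set.univ) (Set.mem_univ _)
    (fun _ _ _ _ => Set.mem_univ _) ?_
  rw [parabolicJ_univ]; trivial

theorem sum_coordH (h : H F q n) : ∑ w, Tw q w * ofCL q (coordH q h w) = h := by
  have hh : h ∈ twSpan q Set.univ := by rw [twSpan_univ]; trivial
  induction hh using Submodule.span_induction with
  | mem h hh =>
    obtain ⟨w, -, b, rfl⟩ := hh
    rw [coordH_Tw_mul, Finset.sum_eq_single w]
    · simp
    · intro v _ hv; simp [hv]
    · simp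
  | zero => simp
  | add x y _ _ hx hy =>
    simp only [map_add, Pi.add_apply, mul_add, Finset.sum_add_distrib, hx, hy]
  | smul r x _ hx =>
    simp only [map_smul, Pi.smul_apply, mul_smul_comm, ← Finset.smul_sum, hx]

theorem mem_twSpan_iff {A : Set (Perm (Fin n))} {h : H F q n} :
    h ∈ twSpan q A ↔ ∀ w ∉ A, coordH q h w = 0 := by
  constructor
  · intro hh v hv
    induction hh using Submodule.span_induction with
    | mem h hh =>
      obtain ⟨w, hw, b, rfl⟩ := hh
      rw [coordH_Tw_mul, Pi.single_eq_of_ne]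
      rintro rfl; exact hv hw
    | zero => simp
    | add x y _ _ hx hy => simp [hx, hy]
    | smul r x _ hx => simp [hx]
  · intro hh
    rw [← sum_coordH q h]
    refine Submodule.sum_mem _ fun w _ => ?_
    by_cases hw : w ∈ A
    · exact mem_twSpan q hw _
    · simp [hh w hw]

/-- Moving elements of the Clifford–Laurent algebra past `T_w` up to lower terms. -/
theorem exists_ofCL_mul_Tw (w : Perm (Fin n)) (a : CL F n) :
    ∃ l ∈ twSpan q {y | BruhatLE y w ∧ y ≠ w},
      ofCL q a * Tw q w = Tw q w * ofCL q (CL.perm w⁻¹ a) + l := by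
  induction hN : len w using Nat.strong_induction_on generalizing w with
  | _ N ih =>
  subst hN
  by_cases hw : w = 1
  · exact ⟨0, zero_mem _, by simp [hw, Tw_one]⟩
  obtain ⟨i, hi'⟩ := exists_descent hw
  obtain ⟨v, rfl⟩ : ∃ v, w = v * s i := ⟨w * s i, (mul_s_mul_s w i).symm⟩
  simp only [Perm.mul_apply, s_lo, s_hi] at hi'
  have hlen := len_lt_len_mul_s _ hi'
  have hvw : BruhatLE v (v * s i) := by
    refine .single ?_
    exact BruhatStep.mul_s hi'
  obtain ⟨l, hl, e⟩ := ih _ hlen v rfl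
  rw [← Tw_mul_T_of_lt q hi', ← mul_assoc, e, add_mul, mul_assoc, ofCL_mul_T, mul_add,
    ← mul_assoc, add_assoc]
  refine ⟨_, add_mem (mem_twSpan q (w := v) (A := {y | BruhatLE y (v * s i) ∧ y ≠ v * s i})
    ⟨hvw, ?_⟩ (CL.der (q - q⁻¹) i (CL.perm v⁻¹ a))) (twSpan_mul_T q hl (i := i) ?_ ?_), ?_⟩
  · exact fun h => hlen.ne (congrArg len h)
  · rintro y ⟨hy, -⟩
    exact ⟨hy.trans hvw, fun h => (hy.len_le.trans_lt hlen).ne (congrArg len h)⟩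
  · rintro y ⟨hy, hne⟩
    exact ⟨hy.mul_s hi', fun h => hne (mul_left_injective _ h)⟩
  · rw [mul_inv_rev, s_inv, CL.perm_mul]

end

/-! ### Parabolic subalgebras and coset bases -/

section
variable {F : Type} [Field F] (q : F) {n : ℕ} {κ : Type*} [LinearOrder κ] {c : Fin n → κ}

theorem mem_youngJ_of_descent (hc : Monotone c) {w : Perm (Fin n)} (hw : w ∈ young c)
    {i : Fin (n - 1)} (h : w (hi i) < w (lo i)) : i ∈ youngJ c := by
  rcases (hc (lo_lt_hi i).le).eq_or_lt with e | e
  · exact e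
  · exact absurd (lt_of_fiber_lt hc hw e) h.not_gt

theorem ofCL_mem_parabolicJ (J : Set (Fin (n - 1))) (a : CL F n) :
    ofCL q a ∈ parabolicJ F q J := by
  induction a using CL.induction with
  | hs r => rw [AlgHom.commutes]; exact Subalgebra.algebraMap_mem _ r
  | hx j => rw [ofCL_gx]; exact Algebra.subset_adjoin (.inl (.inl (.inl ⟨j, rfl⟩)))
  | hxi j => rw [ofCL_gxi]; exact Algebra.subset_adjoin (.inl (.inl (.inr ⟨j, rfl⟩)))
  | hc j => rw [ofCL_gc]; exact Algebra.subset_adjoin (.inl (.inr ⟨j, rfl⟩))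
  | hmul a b ha hb => rw [map_mul]; exact mul_mem ha hb
  | hadd a b ha hb => rw [map_add]; exact add_mem ha hb

theorem T_mem_parabolicJ {J : Set (Fin (n - 1))} {j : Fin (n - 1)} (hj : j ∈ J) :
    T F q j ∈ parabolicJ F q J :=
  Algebra.subset_adjoin (.inr ⟨j, hj, rfl⟩)

theorem Tw_mem_parabolicJ (hc : Monotone c) {w : Perm (Fin n)} (hw : w ∈ young c) :
    Tw q w ∈ parabolicJ F q (youngJ c) := by
  induction hN : len w using Nat.strong_induction_on generalizing w with
  | _ N ih =>
  subst hN
  by_cases h1 : w = 1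
  · rw [h1, Tw_one]; exact one_mem _
  obtain ⟨i, hi'⟩ := exists_descent h1
  have hJ := mem_youngJ_of_descent hc hw hi'
  rw [Tw_of_descent q w i hi']
  exact mul_mem (ih _ (len_mul_s_lt _ hi') (mul_mem hw (s_mem_young.2 hJ)) rfl)
    (T_mem_parabolicJ q hJ)

theorem mem_parabolicJ_iff (hc : Monotone c) {h : H F q n} :
    h ∈ parabolicJ F q (youngJ c) ↔ h ∈ twSpan q (young c : Set (Perm (Fin n))) := by
  refine ⟨mem_twSpan_of_mem_parabolicJ q (one_mem _)
    fun w hw j hj => mul_mem hw (s_mem_young.2 hj), fun hh => ?_⟩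
  induction hh using Submodule.span_induction with
  | mem h hh =>
    obtain ⟨w, hw, a, rfl⟩ := hh
    exact mul_mem (Tw_mem_parabolicJ q hc hw) (ofCL_mem_parabolicJ q _ a)
  | zero => exact zero_mem _
  | add x y _ _ hx hy => exact add_mem hx hy
  | smul r x _ hx => exact Subalgebra.smul_mem _ hx r

theorem coordH_injective : Function.Injective (coordH (F := F) (n := n) q) := fun a b h => by
  rw [← sum_coordH q a, ← sum_coordH q b, h]

open Classical in
theorem coordH_Tw_mul_of_mem (hc : Monotone c) {d d' u : Perm (Fin n)} (hd : IsMinLeft c d)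
    (hd' : IsMinLeft c d') (hu : u ∈ young c) {h : H F q n}
    (hh : h ∈ parabolicJ F q (youngJ c)) :
    coordH q (Tw q d * h) (d' * u) = if d = d' then coordH q h u else 0 := by
  rw [mem_parabolicJ_iff q hc] at hh
  induction hh using Submodule.span_induction with
  | mem h hh =>
    obtain ⟨v, hv, a, rfl⟩ := hh
    rw [← mul_assoc, Tw_mul q (isReducedMul_of_isMinLeft hc hd hv), coordH_Tw_mul, coordH_Tw_mul]
    split_ifs with e
    · subst e
      simp [Pi.single_apply]
    · refine Pi.single_eq_of_ne (fun e' => e ?_) _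
      exact (isMinLeft_unique hc hd' hd hu hv e').1.symm
  | zero => simp
  | add x y _ _ hx hy =>
    rw [mul_add, map_add, map_add, Pi.add_apply, hx, hy]
    split_ifs <;> simp
  | smul r x _ hx =>
    rw [mul_smul_comm, map_smul, map_smul, Pi.smul_apply, hx]
    split_ifs <;> simp

/-- The minimal length representatives of the left cosets of `young c` in `young c'`. -/
abbrev Reps {κ κ' : Type*} (c' : Fin n → κ') (c : Fin n → κ) : Type :=
  {d : Perm (Fin n) // d ∈ young c' ∧ IsMinLeft c d}

noncomputable instance {κ κ' : Type*} (c' : Fin n → κ') (c : Fin n → κ) : Fintype (Reps c' c) :=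
  Fintype.ofFinite _

/-- The elements `T_d` with `d` a minimal length left coset representative form a basis of a
parabolic subalgebra as a right module over a smaller one. -/
theorem existsUnique_sum_Tw {κ' : Type*} [LinearOrder κ'] {c' : Fin n → κ'} (hc : Monotone c)
    (hc' : Monotone c') (hcc : young c ≤ young c') {h : H F q n}
    (hh : h ∈ parabolicJ F q (youngJ c')) :
    ∃! f : Reps c' c → ↥(parabolicJ F q (youngJ c)),
      h = ∑ d, Tw q d.1 * (f d : H F q n) := by
  classical
  refine existsUnique_of_exists_of_unique ?_ fun f g hf hg => ?_
  · rw [mem_parabolicJ_iff q hc'] at hh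
    induction hh using Submodule.span_induction with
    | mem h hh =>
      obtain ⟨w, hw, a, rfl⟩ := hh
      obtain ⟨d, u, hd, hu, rfl, -⟩ := exists_isMinLeft hc w
      have hd' : d ∈ young c' := (Subgroup.mul_mem_cancel_right _ (hcc hu)).1 hw
      refine ⟨Pi.single ⟨d, hd', hd⟩ ⟨Tw q u * ofCL q a,
        mul_mem (Tw_mem_parabolicJ q hc hu) (ofCL_mem_parabolicJ q _ a)⟩, ?_⟩
      rw [Finset.sum_eq_single ⟨d, hd', hd⟩ (fun e _ he => by
        rw [Pi.single_eq_of_ne he, ZeroMemClass.coe_zero, mul_zero]) (by simp), Pi.single_eq_same,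
        ← mul_assoc, Tw_mul q (isReducedMul_of_isMinLeft hc hd hu)]
    | zero => exact ⟨0, by simp⟩
    | add x y _ _ hx hy =>
      obtain ⟨f, rfl⟩ := hx
      obtain ⟨g, rfl⟩ := hy
      refine ⟨f + g, ?_⟩
      rw [← Finset.sum_add_distrib]
      refine Finset.sum_congr rfl fun d _ => ?_
      rw [Pi.add_apply, Subalgebra.coe_add, mul_add]
    | smul r x _ hx =>
      obtain ⟨f, rfl⟩ := hx
      refine ⟨r • f, ?_⟩
      rw [Finset.smul_sum]
      refine Finset.sum_congr rfl fun d _ => ?_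
      rw [Pi.smul_apply, Subalgebra.coe_smul, mul_smul_comm]
  · have key (f : Reps c' c →
        ↥(parabolicJ F q (youngJ c))) (hf : h = ∑ d, Tw q d.1 * (f d : H F q n))
        (d : Reps c' c) (u : Perm (Fin n))
        (hu : u ∈ young c) : coordH q h (d * u) = coordH q (f d : H F q n) u := by
      rw [hf, map_sum, Finset.sum_apply, Finset.sum_eq_single d]
      · rw [coordH_Tw_mul_of_mem q hc d.2.2 d.2.2 hu (f d).2, if_pos rfl]
      · intro e _ he
        rw [coordH_Tw_mul_of_mem q hc e.2.2 d.2.2 hu (f e).2, if_neg fun h => he (Subtype.ext h)]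
      · simp
    ext d
    refine coordH_injective q (funext fun u => ?_)
    by_cases hu : u ∈ young c
    · rw [← key f hf d u hu, ← key g hg d u hu]
    · rw [(mem_twSpan_iff q).1 ((mem_parabolicJ_iff q hc).1 (f d).2) u hu,
        (mem_twSpan_iff q).1 ((mem_parabolicJ_iff q hc).1 (g d).2) u hu]

end

/-! ### Induced modules along a free extension -/

section
variable {F : Type} [Field F] {A B : Type} [Ring A] [Ring B] [Algebra F A] [Algebra F B]
  {φ : B →ₐ[F] A} {M : Type} [AddCommGroup M] [Module F M] {ρ : B →ₐ[F] Module.End F M}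
  {E : Type} [AddCommGroup E] [Module F E] {ρE : A →ₐ[F] Module.End F E} {ι : M →ₗ[F] E}

/-- If `A` is free as a right `B`-module with basis `t`, then an element of the induced module
is uniquely of the form `∑ t_d ⊗ m_d`. -/
theorem IsInducedAlong.exists_equiv {D : Type} [Fintype D] {t : D → A}
    (ht : ∀ a, ∃! f : D → B, a = ∑ d, t d * φ (f d)) (h : IsInducedAlong F φ ρ ρE ι) :
    ∃ K : (D → M) ≃ₗ[F] E, ∀ m, K m = ∑ d, ρE (t d) (ι (m d)) := by
  classical
  obtain ⟨hι, huniv⟩ := h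
  let L : (D → B) →ₗ[F] A :=
    { toFun := fun f => ∑ d, t d * φ (f d)
      map_add' := fun f g => by simp [mul_add, Finset.sum_add_distrib]
      map_smul' := fun r f => by simp [Finset.smul_sum] }
  have hL : Function.Bijective L := by
    refine ⟨fun f g hfg => (ht (L f)).unique rfl hfg, fun a => ?_⟩
    obtain ⟨f, hf, -⟩ := ht a
    exact ⟨f, hf.symm⟩
  let Le := LinearEquiv.ofBijective L hL
  let cf : A →ₗ[F] (D → B) := Le.symm.toLinearMap
  have cf_spec (a : A) : ∑ d, t d * φ (cf a d) = a := Le.apply_symm_apply a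
  have cf_L (f : D → B) : cf (∑ d, t d * φ (f d)) = f := Le.symm_apply_apply f
  have cf_t (e : D) : cf (t e) = Pi.single e 1 := by
    rw [← cf_L (Pi.single e 1)]
    congr 1
    rw [Finset.sum_eq_single e] <;> simp +contextual
  have cf_mul_φ (a : A) (b : B) (d : D) : cf (a * φ b) d = cf a d * b := by
    have := cf_L (fun d => cf a d * b)
    simp only [map_mul, ← mul_assoc, ← Finset.sum_mul, cf_spec] at this
    exact congrFun this d
  have cf_mul (a b : A) (d : D) : cf (a * b) d = ∑ e, cf (a * t e) d * cf b e := by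
    conv_lhs => rw [← cf_spec b, Finset.mul_sum]
    rw [map_sum, Finset.sum_apply]
    exact Finset.sum_congr rfl fun e _ => by rw [← mul_assoc, cf_mul_φ]
  let P (a : A) : Module.End F (D → M) :=
    { toFun := fun m d => ∑ e, ρ (cf (a * t e) d) (m e)
      map_add' := fun m m' => by ext d; simp [Finset.sum_add_distrib]
      map_smul' := fun r m => by ext d; simp [Finset.smul_sum] }
  have P_apply (a : A) (m : D → M) (d : D) : P a m d = ∑ e, ρ (cf (a * t e) d) (m e) := rfl
  let ρP : A →ₐ[F] Module.End F (D → M) := AlgHom.ofLinearMap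
    { toFun := P
      map_add' := fun a b => by
        ext1; ext1 m; ext d
        simp [P_apply, add_mul, Finset.sum_add_distrib]
      map_smul' := fun r a => by
        ext1; ext1 m; ext d
        simp [P_apply, Finset.smul_sum] }
    (by
      refine LinearMap.ext fun m => funext fun d => ?_
      change P 1 m d = m d
      rw [P_apply, Finset.sum_eq_single d]
      · simp [cf_t]
      · intro e _ he
        simp [cf_t, Pi.single_eq_of_ne he.symm]
      · simp)
    (fun a b => by
      refine LinearMap.ext fun m => funext fun d => ?_
      change P (a * b) m d = P a (P b m) d
      simp only [P_apply, map_sum]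
      rw [Finset.sum_comm]
      refine Finset.sum_congr rfl fun e _ => ?_
      rw [mul_assoc, cf_mul, map_sum, LinearMap.sum_apply]
      simp)
  have ρP_apply (a : A) (m : D → M) (d : D) : ρP a m d = ∑ e, ρ (cf (a * t e) d) (m e) := rfl
  let f : M →ₗ[F] (D → M) := LinearMap.pi fun d => ρ (cf 1 d)
  have f_apply (m : M) (d : D) : f m d = ρ (cf 1 d) m := rfl
  have ρP_f (a : A) (m : M) (d : D) : ρP a (f m) d = ρ (cf a d) m := by
    rw [ρP_apply]
    conv_rhs => rw [← mul_one a, cf_mul, map_sum, LinearMap.sum_apply]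
    simp [f_apply]
  let K : (D → M) →ₗ[F] E := ∑ d, (ρE (t d)).comp (ι.comp (LinearMap.proj d))
  have K_apply (m : D → M) : K m = ∑ d, ρE (t d) (ι (m d)) := by simp [K]
  have K_ρP (a : A) (m : D → M) : K (ρP a m) = ρE a (K m) := by
    simp only [K_apply, ρP_apply, map_sum, hι]
    rw [Finset.sum_comm]
    refine Finset.sum_congr rfl fun e _ => ?_
    rw [← Module.End.mul_apply (ρE a), ← map_mul]
    conv_rhs => rw [← cf_spec (a * t e), map_sum, LinearMap.sum_apply]
    simp
  obtain ⟨g, ⟨hg1, hg2⟩, -⟩ := huniv (D → M) ρP f fun b m => by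
    ext d
    rw [ρP_f, f_apply, ← Module.End.mul_apply, ← map_mul, ← cf_mul_φ, one_mul]
  have hKg : K.comp g = LinearMap.id := by
    refine (huniv E ρE ι hι).unique ⟨fun x e => ?_, fun m => ?_⟩ ⟨fun _ _ => rfl, fun _ => rfl⟩
    · simp only [LinearMap.comp_apply, hg1, K_ρP]
    · rw [LinearMap.comp_apply, hg2, K_apply]
      simp only [f_apply, hι]
      conv_rhs => rw [← Module.End.one_apply (R := F) (ι m), ← map_one ρE, ← cf_spec 1, map_sum,
        LinearMap.sum_apply]
      simp
  have hgK : g.comp K = LinearMap.id := by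
    refine LinearMap.ext fun m => funext fun e => ?_
    rw [LinearMap.comp_apply, K_apply, map_sum, Finset.sum_apply]
    simp only [hg1, hg2, ρP_f, cf_t, LinearMap.id_apply]
    rw [Finset.sum_eq_single e]
    · simp
    · intro d _ hd
      simp [Pi.single_eq_of_ne hd.symm]
    · simp
  exact ⟨LinearEquiv.ofLinearMap K g hKg hgK, K_apply⟩

end

/-! ### Double cosets of Young subgroups -/

section
variable {n : ℕ} {κ κ' : Type*} [LinearOrder κ] [LinearOrder κ'] {c' : Fin n → κ'}
  {c : Fin n → κ}

/-- Both `x` and its inverse are minimal length coset representatives. -/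
structure IsMinDouble (c : Fin n → κ) (c' : Fin n → κ') (x : Perm (Fin n)) : Prop where
  right : IsMinLeft c' x
  left : IsMinLeft c x⁻¹

theorem IsMinDouble.len_le (hc : Monotone c) (hc' : Monotone c') {x u v : Perm (Fin n)}
    (hx : IsMinDouble c c' x) (hu : u ∈ young c) (hv : v ∈ young c') :
    len x ≤ len (u * x * v) := by
  refine Finset.card_le_card_of_injOn (fun p => (v⁻¹ p.1, v⁻¹ p.2)) ?_ ?_
  · rintro ⟨a, b⟩ hab
    simp only [Finset.coe_filter, Finset.mem_univ, true_and, Set.mem_ofPred_eq] at hab ⊢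
    have h1 := fiber_lt_of_inversion hc hx.left hab.1 hab.2
    have h2 : c' a < c' b := by
      refine (hc' hab.1.le).lt_of_ne fun e => ?_
      exact (hx.right a b hab.1 e).not_gt hab.2
    refine ⟨lt_of_fiber_lt hc' (inv_mem hv) h2, ?_⟩
    simpa using lt_of_fiber_lt hc hu h1
  · rintro ⟨a, b⟩ _ ⟨a', b'⟩ _ h
    simpa using h

theorem isMinDouble_of_len_le (hc : Monotone c) (hc' : Monotone c') {x : Perm (Fin n)}
    (h : ∀ u v, u ∈ young c → v ∈ young c' → len x ≤ len (u * x * v)) : IsMinDouble c c' x where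
  right := isMinLeft_of_simple hc' fun i hi' => by
    by_contra hlt
    have h1 := (not_lt.1 hlt).lt_of_ne (x.injective.ne (lo_ne_hi i).symm)
    have h2 := h 1 (s i) (one_mem _) (s_mem_young.2 hi')
    rw [one_mul] at h2
    exact (len_mul_s_lt x h1).not_ge h2
  left := isMinLeft_of_simple hc fun i hi' => by
    by_contra hlt
    have h1 := (not_lt.1 hlt).lt_of_ne (x⁻¹.injective.ne (lo_ne_hi i).symm)
    have h2 := h (s i) 1 (s_mem_young.2 hi') (one_mem _)
    rw [mul_one, ← len_inv (s i * x), mul_inv_rev, s_inv, ← len_inv x] at h2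
    exact (len_mul_s_lt x⁻¹ h1).not_ge h2

theorem exists_isMinDouble_of_isMinLeft (hc : Monotone c) {d : Perm (Fin n)}
    (hd : IsMinLeft c' d) :
    ∃ u x, u ∈ young c ∧ IsMinDouble c c' x ∧ d = u * x ∧ BruhatLE x d := by
  obtain ⟨e, v, he, hv, hdv, hle⟩ := exists_isMinLeft hc d⁻¹
  have hde : d = v⁻¹ * e⁻¹ := by rw [← mul_inv_rev, ← hdv, inv_inv]
  have he' : IsMinLeft c e⁻¹⁻¹ := by rwa [inv_inv]
  refine ⟨v⁻¹, e⁻¹, inv_mem hv, ⟨fun a b hab hcab => ?_, he'⟩, hde,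
    by simpa using hle.inv⟩
  by_contra hlt
  have h1 := (not_lt.1 hlt).lt_of_ne (e⁻¹.injective.ne hab.ne')
  have h2 := lt_of_fiber_lt hc (inv_mem hv) (fiber_lt_of_inversion hc he' hab h1)
  have h3 := hd a b hab hcab
  rw [hde] at h3
  exact h2.not_gt h3

theorem IsMinDouble.unique (hc : Monotone c) {x x' u u' : Perm (Fin n)}
    (hx : IsMinDouble c c' x) (hx' : IsMinDouble c c' x') (hu : u ∈ young c) (hu' : u' ∈ young c)
    (h : u * x = u' * x') : x = x' ∧ u = u' := by
  have := isMinLeft_unique hc hx.left hx'.left (inv_mem hu) (inv_mem hu')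
    (by rw [← mul_inv_rev, h, mul_inv_rev])
  simpa using this

theorem BruhatLE.len_lt {v w : Perm (Fin n)} (h : BruhatLE v w) (hne : v ≠ w) :
    len v < len w := by
  rcases Relation.ReflTransGen.cases_head h with rfl | ⟨y, hy, hyw⟩
  · exact absurd rfl hne
  · exact hy.choose_spec.choose_spec.2.2.trans_le (BruhatLE.len_le hyw)

/-- The colouring whose Young subgroup is the intersection of `young c` with the conjugate of
`young c'` by `x`. -/
def interColour (c : Fin n → κ) (c' : Fin n → κ') (x : Perm (Fin n)) : Fin n → κ ×ₗ κ' :=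
  fun k => toLex (c k, c' (x⁻¹ k))

theorem interColour_eq_iff {x : Perm (Fin n)} {a b : Fin n} :
    interColour c c' x a = interColour c c' x b ↔ c a = c b ∧ c' (x⁻¹ a) = c' (x⁻¹ b) := by
  simp only [interColour, EmbeddingLike.apply_eq_iff_eq, Prod.mk.injEq]

theorem young_interColour_le (x : Perm (Fin n)) : young (interColour c c' x) ≤ young c :=
  fun _ hw k => (interColour_eq_iff.1 (hw k)).1

theorem IsMinDouble.monotone_interColour (hc : Monotone c) (hc' : Monotone c')
    {x : Perm (Fin n)} (hx : IsMinDouble c c' x) : Monotone (interColour c c' x) := by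
  intro a b hab
  rcases hab.eq_or_lt with rfl | hlt
  · exact le_rfl
  refine Prod.Lex.toLex_le_toLex.2 ?_
  rcases (hc hab).lt_or_eq with h | h
  · exact .inl h
  · exact .inr ⟨h, hc' (hx.left a b hlt h).le⟩

theorem IsMinDouble.isMinLeft_mul_iff (hc : Monotone c) {x u : Perm (Fin n)}
    (hx : IsMinDouble c c' x) (hu : u ∈ young c) :
    IsMinLeft c' (u * x) ↔ IsMinLeft (interColour c c' x) u := by
  constructor
  · intro h a b hab hcab
    obtain ⟨h1, h2⟩ := interColour_eq_iff.1 hcab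
    simpa using h _ _ (hx.left a b hab h1) h2
  · intro h a b hab hcab
    have h1 := hx.right a b hab hcab
    rcases (hc h1.le).lt_or_eq with h2 | h2
    · exact lt_of_fiber_lt hc hu h2
    · exact h _ _ h1 (interColour_eq_iff.2 ⟨h2, by simpa using hcab⟩)

theorem IsMinDouble.exists_conj (hc' : Monotone c') {x : Perm (Fin n)}
    (hx : IsMinDouble c c' x) {j : Fin (n - 1)} (hj : j ∈ youngJ (interColour c c' x)) :
    ∃ j' ∈ youngJ c', lo j' = x⁻¹ (lo j) ∧ hi j' = x⁻¹ (hi j) := by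
  obtain ⟨h1, h2⟩ := interColour_eq_iff.1 hj
  have hlt := hx.left _ _ (lo_lt_hi j) h1
  have hsucc : (x⁻¹ (hi j)).val = (x⁻¹ (lo j)).val + 1 := by
    by_contra hne
    have hlt' := Fin.lt_def.1 hlt
    have hb := (x⁻¹ (hi j)).isLt
    let p : Fin n := ⟨(x⁻¹ (lo j)).val + 1, by omega⟩
    have hp1 : x⁻¹ (lo j) < p := Fin.lt_def.2 (Nat.lt_succ_self _)
    have hp2 : p < x⁻¹ (hi j) := Fin.lt_def.2 (by simp only [p]; omega)
    have e1 : c' (x⁻¹ (lo j)) = c' p :=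
      le_antisymm (hc' hp1.le) ((hc' hp2.le).trans h2.ge)
    have l1 := hx.right _ _ hp1 e1
    have l2 := hx.right _ _ hp2 (e1.symm.trans h2)
    simp [Fin.lt_def, lo, hi] at l1 l2
    omega
  have hb := (x⁻¹ (hi j)).isLt
  have e1 : lo (⟨(x⁻¹ (lo j)).val, by omega⟩ : Fin (n - 1)) = x⁻¹ (lo j) := rfl
  have e2 : hi (⟨(x⁻¹ (lo j)).val, by omega⟩ : Fin (n - 1)) = x⁻¹ (hi j) := Fin.ext hsucc.symm
  exact ⟨_, by rw [youngJ, Set.mem_ofPred_eq, e1, e2]; exact h2, e1, e2⟩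

theorem blk_mono (μ : List ℕ) : Monotone (blk μ) := by
  induction μ with
  | nil => intro a b _; exact le_rfl
  | cons a l ih =>
    intro k k' hk
    simp only [blk]
    split_ifs with h1 h2
    · exact le_rfl
    · exact Nat.zero_le _
    · omega
    · exact Nat.succ_le_succ (ih (Nat.sub_le_sub_right hk a))

/-- The colouring of positions by the blocks of a composition. -/
def blkColour (n : ℕ) (μ : List ℕ) : Fin n → ℕ := fun k => blk μ k

theorem blkColour_mono (μ : List ℕ) : Monotone (blkColour n μ) := fun _ _ h => blk_mono μ h

theorem inYoung_iff {μ : List ℕ} {w : Perm (Fin n)} : InYoung μ w ↔ w ∈ young (blkColour n μ) :=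
  Iff.rfl

theorem isMinDC_iff {μ ν : List ℕ} {x : Perm (Fin n)} :
    IsMinDC μ ν x ↔ IsMinDouble (blkColour n μ) (blkColour n ν) x :=
  ⟨isMinDouble_of_len_le (blkColour_mono μ) (blkColour_mono ν),
    fun h _ _ => h.len_le (blkColour_mono μ) (blkColour_mono ν)⟩

theorem Jcap_eq (μ ν : List ℕ) (x : Perm (Fin n)) :
    Jcap μ ν x = youngJ (interColour (blkColour n μ) (blkColour n ν) x) := by
  ext j
  have e : x⁻¹ * s j * x = swap (x⁻¹ (lo j)) (x⁻¹ (hi j)) := by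
    rw [s, Equiv.mul_swap_eq_swap_mul, mul_assoc, inv_mul_cancel, mul_one]
  rw [youngJ, Set.mem_ofPred_eq, interColour_eq_iff, Jcap, Set.mem_ofPred_eq, inYoung_iff,
    inYoung_iff, e, swap_mem_young, s, swap_mem_young]

theorem parabolicC_eq (F : Type) [Field F] (q : F) (μ : List ℕ) :
    parabolicC F q (n := n) μ = parabolicJ F q (youngJ (blkColour n μ)) := by
  rw [parabolicC]
  congr 1
  ext j
  rw [Set.mem_ofPred_eq, inYoung_iff, s_mem_young]

end

/-! ### The Mackey filtration -/

section
variable {F : Type} [Field F] {q : F} {n : ℕ} {μ ν : List ℕ} {M E : Type} [AddCommGroup M]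
  [Module F M] [AddCommGroup E] [Module F E]
  {ρν : ↥(parabolicC F q (n := n) ν) →ₐ[F] Module.End F M}
  {ρE : H F q n →ₐ[F] Module.End F E} {ι : M →ₗ[F] E}

/-- The minimal length left coset representatives of the Young subgroup of `ν`. -/
abbrev LReps (n : ℕ) (ν : List ℕ) : Type := Reps (fun _ : Fin n => (0 : ℕ)) (blkColour n ν)

theorem existsUnique_sum_Tw_top (q : F) (ν : List ℕ) (h : H F q n) :
    ∃! f : LReps n ν → ↥(parabolicC F q (n := n) ν),
      h = ∑ d, Tw q d.1 * (parabolicC F q (n := n) ν).val (f d) := by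
  rw [parabolicC_eq]
  refine existsUnique_sum_Tw q (blkColour_mono ν) (fun _ _ _ => le_rfl) (fun _ _ _ => rfl) ?_
  have : youngJ (fun _ : Fin n => (0 : ℕ)) = Set.univ := Set.eq_univ_of_forall fun _ => rfl
  rw [this, parabolicJ_univ]
  trivial

theorem existsUnique_sum_Tw_Jcap (q : F) {x : Perm (Fin n)} (hx : IsMinDC μ ν x)
    {h : H F q n} (hh : h ∈ parabolicC F q (n := n) μ) :
    ∃! f : Reps (blkColour n μ) (interColour (blkColour n μ) (blkColour n ν) x) →
      ↥(parabolicJ F q (Jcap μ ν x)), h = ∑ d, Tw q d.1 * (f d : H F q n) := by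
  rw [Jcap_eq]
  rw [parabolicC_eq] at hh
  exact existsUnique_sum_Tw q
    ((isMinDC_iff.1 hx).monotone_interColour (blkColour_mono μ) (blkColour_mono ν))
    (blkColour_mono μ) (young_interColour_le x) hh

theorem Tw_mem_parabolicC (q : F) {w : Perm (Fin n)} (hw : w ∈ young (blkColour n μ)) :
    Tw q w ∈ parabolicC F q (n := n) μ := by
  rw [parabolicC_eq]
  exact Tw_mem_parabolicJ q (blkColour_mono μ) hw

theorem ofCL_mem_parabolicC (q : F) (μ : List ℕ) (a : CL F n) :
    ofCL q a ∈ parabolicC F q (n := n) μ :=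
  ofCL_mem_parabolicJ q _ a

/-- `K` identifies `E` with the sum of copies of `M` indexed by coset representatives. -/
structure IsFrame (ρν : ↥(parabolicC F q (n := n) ν) →ₐ[F] Module.End F M)
    (ρE : H F q n →ₐ[F] Module.End F E) (ι : M →ₗ[F] E) (K : (LReps n ν → M) ≃ₗ[F] E) : Prop where
  map_smul' : ∀ b m, ι (ρν b m) = ρE (b : H F q n) (ι m)
  apply_eq : ∀ m, K m = ∑ d, ρE (Tw q d.1) (ι (m d))

variable {K : (LReps n ν → M) ≃ₗ[F] E}

open Classical in
theorem IsFrame.single (hK : IsFrame ρν ρE ι K) (d : LReps n ν) (m : M) :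
    K (Pi.single d m) = ρE (Tw q d.1) (ι m) := by
  rw [hK.apply_eq, Finset.sum_eq_single d]
  · rw [Pi.single_eq_same]
  · intro e _ he
    rw [Pi.single_eq_of_ne he, map_zero, map_zero]
  · simp

/-- The subspace spanned by the cosets with representative in `S`. -/
def cellSpace (K : (LReps n ν → M) ≃ₗ[F] E) (S : Set (Perm (Fin n))) : Submodule F E where
  carrier := {e | ∀ d : LReps n ν, d.1 ∉ S → K.symm e d = 0}
  add_mem' ha hb d hd := by rw [map_add, Pi.add_apply, ha d hd, hb d hd, add_zero]
  zero_mem' d _ := by rw [map_zero, Pi.zero_apply]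
  smul_mem' r e he d hd := by rw [map_smul, Pi.smul_apply, he d hd, smul_zero]

theorem cellSpace_mono {S S' : Set (Perm (Fin n))} (h : S ⊆ S') :
    cellSpace K S ≤ cellSpace K S' := fun _ he d hd => he d fun hd' => hd (h hd')

theorem IsFrame.Tw_mem (hK : IsFrame ρν ρE ι K) {S : Set (Perm (Fin n))} {d : Perm (Fin n)}
    (hd : IsMinLeft (blkColour n ν) d) (hS : d ∈ S) (m : M) :
    ρE (Tw q d) (ι m) ∈ cellSpace K S := by
  classical
  intro e he
  rw [← hK.single ⟨d, fun _ => rfl, hd⟩ m, LinearEquiv.symm_apply_apply, Pi.single_eq_of_ne]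
  rintro rfl
  exact he hS

theorem IsFrame.cell_induction (hK : IsFrame ρν ρE ι K) {S : Set (Perm (Fin n))}
    {p : Submodule F E}
    (h : ∀ d ∈ S, IsMinLeft (blkColour n ν) d → ∀ m, ρE (Tw q d) (ι m) ∈ p) :
    cellSpace K S ≤ p := by
  intro e he
  rw [← K.apply_symm_apply e, hK.apply_eq]
  refine Submodule.sum_mem _ fun d _ => ?_
  by_cases hd : d.1 ∈ S
  · exact h d.1 hd d.2.2 _
  · rw [he d hd, map_zero, map_zero]
    exact zero_mem _

theorem IsFrame.twSpan_mem (hK : IsFrame ρν ρE ι K) {S A : Set (Perm (Fin n))}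
    (hA : ∀ y ∈ A, ∃ d v, IsMinLeft (blkColour n ν) d ∧ v ∈ young (blkColour n ν) ∧
      y = d * v ∧ d ∈ S) {h : H F q n} (hh : h ∈ twSpan q A) (m : M) :
    ρE h (ι m) ∈ cellSpace K S := by
  induction hh using Submodule.span_induction with
  | mem h hh =>
    obtain ⟨y, hy, a, rfl⟩ := hh
    obtain ⟨d, v, hd, hv, rfl, hS⟩ := hA y hy
    have := hK.Tw_mem hd hS (ρν ⟨Tw q v * ofCL q a, mul_mem (Tw_mem_parabolicC q hv)
      (ofCL_mem_parabolicC q ν a)⟩ m)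
    rwa [hK.map_smul', ← Module.End.mul_apply, ← map_mul, ← mul_assoc,
      Tw_mul q (isReducedMul_of_isMinLeft (blkColour_mono ν) hd hv)] at this
  | zero => rw [map_zero]; exact zero_mem _
  | add x y _ _ hx hy => rw [map_add]; exact add_mem hx hy
  | smul r x _ hx => rw [map_smul]; exact Submodule.smul_mem _ _ hx

/-- `xs` enumerates the minimal double coset representatives in an order refining the Bruhat
order. -/
structure IsRefinement (μ ν : List ℕ) (xs : List (Perm (Fin n))) : Prop where
  nodup : xs.Nodup
  mem_iff : ∀ x, IsMinDC μ ν x ↔ x ∈ xs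
  lt_of_bruhatLE : ∀ i j : Fin xs.length, BruhatLE (xs.get i) (xs.get j) →
    xs.get i ≠ xs.get j → (i : ℕ) < (j : ℕ)

variable {xs : List (Perm (Fin n))}

theorem IsRefinement.isMinDouble (hx : IsRefinement μ ν xs) (i : Fin xs.length) :
    IsMinDouble (blkColour n μ) (blkColour n ν) (xs.get i) :=
  isMinDC_iff.1 ((hx.mem_iff _).2 (List.get_mem _ _))

/-- The union of the first `k` cells. -/
def cells (μ : List ℕ) (xs : List (Perm (Fin n))) (k : ℕ) : Set (Perm (Fin n)) :=
  {d | ∃ i : Fin xs.length, i.val < k ∧ ∃ u ∈ young (blkColour n μ), d = u * xs.get i}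

theorem cells_mono (μ : List ℕ) (xs : List (Perm (Fin n))) : Monotone (cells μ xs) :=
  fun _ _ hk _ ⟨i, hi, h⟩ => ⟨i, hi.trans_le hk, h⟩

theorem IsRefinement.mem_cells (hx : IsRefinement μ ν xs) {d : Perm (Fin n)}
    (hd : IsMinLeft (blkColour n ν) d) :
    ∃ i : Fin xs.length, BruhatLE (xs.get i) d ∧ ∃ u ∈ young (blkColour n μ), d = u * xs.get i := by
  obtain ⟨u, x, hu, hxd, rfl, hle⟩ := exists_isMinDouble_of_isMinLeft (blkColour_mono μ) hd
  obtain ⟨i, rfl⟩ := List.get_of_mem ((hx.mem_iff x).1 (isMinDC_iff.2 hxd))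
  exact ⟨i, hle, u, hu, rfl⟩

theorem IsRefinement.mem_cells_of_lt (hx : IsRefinement μ ν xs) (k : Fin xs.length)
    {y : Perm (Fin n)} (hy : BruhatLE y (xs.get k)) (hne : y ≠ xs.get k) :
    ∃ d v, IsMinLeft (blkColour n ν) d ∧ v ∈ young (blkColour n ν) ∧ y = d * v ∧
      d ∈ cells μ xs k := by
  obtain ⟨d, v, hd, hv, e, hdy⟩ := exists_isMinLeft (blkColour_mono ν) y
  obtain ⟨i, hi, h⟩ := hx.mem_cells hd
  refine ⟨d, v, hd, hv, e, i, hx.lt_of_bruhatLE i k ((hi.trans hdy).trans hy) fun e' => ?_, h⟩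
  have h1 := hy.len_lt hne
  have h2 := BruhatLE.len_le (hi.trans hdy)
  rw [e'] at h2
  exact h1.not_ge h2

theorem IsRefinement.mul_notMem_cells (hx : IsRefinement μ ν xs) (k : Fin xs.length)
    {u : Perm (Fin n)} (hu : u ∈ young (blkColour n μ)) : u * xs.get k ∉ cells μ xs k := by
  rintro ⟨i, hi, u', hu', e⟩
  have := ((hx.isMinDouble k).unique (blkColour_mono μ) (hx.isMinDouble i) hu hu' e).1
  exact hi.ne (congrArg Fin.val ((hx.nodup.get_inj_iff).1 this)).symm

theorem mul_get_mem_cells (k : Fin xs.length) {u : Perm (Fin n)}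
    (hu : u ∈ young (blkColour n μ)) : u * xs.get k ∈ cells μ xs (k + 1) :=
  ⟨k, Nat.lt_succ_self _, u, hu, rfl⟩

theorem exists_ofCL_mul_Tw_get (hK : IsFrame ρν ρE ι K) (hx : IsRefinement μ ν xs)
    (k : Fin xs.length) (a : CL F n) (m : M) :
    ∃ l ∈ cellSpace K (cells μ xs k), ρE (ofCL q a * Tw q (xs.get k)) (ι m)
      = ρE (Tw q (xs.get k)) (ι (ρν ⟨ofCL q (CL.perm (xs.get k)⁻¹ a),
          ofCL_mem_parabolicC q ν _⟩ m)) + l := by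
  obtain ⟨l, hl, e⟩ := exists_ofCL_mul_Tw q (xs.get k) a
  refine ⟨ρE l (ι m), hK.twSpan_mem (fun y hy => hx.mem_cells_of_lt k hy.1 hy.2) hl m, ?_⟩
  rw [e, map_add, hK.map_smul', map_mul]
  rfl

end

section
variable {F : Type} [Field F] {q : F} {n : ℕ} {μ ν : List ℕ} {M E : Type} [AddCommGroup M]
  [Module F M] [AddCommGroup E] [Module F E]
  {ρν : ↥(parabolicC F q (n := n) ν) →ₐ[F] Module.End F M}
  {ρE : H F q n →ₐ[F] Module.End F E} {ι : M →ₗ[F] E}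
  {K : (LReps n ν → M) ≃ₗ[F] E} {xs : List (Perm (Fin n))}

theorem T_mul_Tw_get (q : F) (hx : IsRefinement μ ν xs) (k : Fin xs.length) {j : Fin (n - 1)}
    (hj : j ∈ Jcap μ ν (xs.get k)) :
    ∃ j', T F q j' ∈ parabolicC F q (n := n) ν ∧ lo j' = (xs.get k)⁻¹ (lo j) ∧
      T F q j * Tw q (xs.get k) = Tw q (xs.get k) * T F q j' := by
  have hd := hx.isMinDouble k
  generalize xs.get k = x at *
  rw [Jcap_eq] at hj
  obtain ⟨j', hj', h1, h2⟩ := hd.exists_conj (blkColour_mono ν) hj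
  refine ⟨j', by rw [parabolicC_eq]; exact T_mem_parabolicJ q hj', h1, ?_⟩
  have hs : s j ∈ young (blkColour n μ) := s_mem_young.2 (interColour_eq_iff.1 hj).1
  have e : s j * x = x * s j' := by
    rw [s, s, Equiv.mul_swap_eq_swap_mul, h1, h2]
    simp
  rw [← Tw_s q j, Tw_mul q (isReducedMul_of_isMinLeft_inv (blkColour_mono μ) hd.left hs),
    Tw_mul_T_of_lt q, e]
  rw [h1, h2]
  simpa using lo_lt_hi j

/-- Modulo lower cells, the subalgebra `H_{μ ∩ xν}` acts on `T_x ⊗ M` through the twisted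
representation. -/
theorem exists_twisted_action (hK : IsFrame ρν ρE ι K) (hx : IsRefinement μ ν xs)
    (k : Fin xs.length)
    (hst : ∀ b ∈ parabolicC F q (n := n) μ, ∀ e ∈ cellSpace K (cells μ xs k),
      ρE b e ∈ cellSpace K (cells μ xs k))
    {h : H F q n} (hh : h ∈ parabolicJ F q (Jcap μ ν (xs.get k))) :
    ∃ f : M → M, (∀ m, ∃ l ∈ cellSpace K (cells μ xs k),
        ρE (h * Tw q (xs.get k)) (ι m) = ρE (Tw q (xs.get k)) (ι (f m)) + l) ∧
      ∀ ρ' : ↥(parabolicJ F q (Jcap μ ν (xs.get k))) →ₐ[F] Module.End F M,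
        IsTwistedRep F q ν (xs.get k) (parabolicJ F q (Jcap μ ν (xs.get k))) ρν ρ' →
        ∀ m, ρ' ⟨h, hh⟩ m = f m := by
  induction hh using Algebra.adjoin_induction with
  | mem h hh =>
    rcases hh with ((⟨j, rfl⟩ | ⟨j, rfl⟩) | ⟨j, rfl⟩) | ⟨j, hj, rfl⟩
    · refine ⟨ρν ⟨_, ofCL_mem_parabolicC q ν (CL.perm (xs.get k)⁻¹ (CL.gx F j))⟩, fun m => ?_,
        fun ρ' hρ' m => ?_⟩
      · simpa only [ofCL_gx] using exists_ofCL_mul_Tw_get hK hx k (CL.gx F j) m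
      · rw [hρ'.1 j _ ⟨_, ofCL_mem_parabolicC q ν (CL.perm (xs.get k)⁻¹ (CL.gx F j))⟩ rfl
          (by simp)]
    · refine ⟨ρν ⟨_, ofCL_mem_parabolicC q ν (CL.perm (xs.get k)⁻¹ (CL.gxi F j))⟩, fun m => ?_,
        fun ρ' hρ' m => ?_⟩
      · simpa only [ofCL_gxi] using exists_ofCL_mul_Tw_get hK hx k (CL.gxi F j) m
      · rw [hρ'.2.1 j _ ⟨_, ofCL_mem_parabolicC q ν (CL.perm (xs.get k)⁻¹ (CL.gxi F j))⟩ rfl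
          (by simp)]
    · refine ⟨ρν ⟨_, ofCL_mem_parabolicC q ν (CL.perm (xs.get k)⁻¹ (CL.gc F j))⟩, fun m => ?_,
        fun ρ' hρ' m => ?_⟩
      · simpa only [ofCL_gc] using exists_ofCL_mul_Tw_get hK hx k (CL.gc F j) m
      · rw [hρ'.2.2.1 j _ ⟨_, ofCL_mem_parabolicC q ν (CL.perm (xs.get k)⁻¹ (CL.gc F j))⟩ rfl
          (by simp)]
    · obtain ⟨j', hj', hlo, e⟩ := T_mul_Tw_get q hx k hj
      refine ⟨ρν ⟨_, hj'⟩, fun m => ⟨0, zero_mem _, ?_⟩, fun ρ' hρ' m => ?_⟩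
      · rw [e, map_mul, hK.map_smul', add_zero]
        rfl
      · rw [hρ'.2.2.2 j j' _ ⟨_, hj'⟩ hlo rfl rfl]
  | algebraMap r =>
    refine ⟨fun m => r • m, fun m => ⟨0, zero_mem _, ?_⟩, fun ρ' _ m => ?_⟩
    · rw [← Algebra.smul_def, map_smul, LinearMap.smul_apply, map_smul, map_smul, add_zero]
    · exact (congrArg (fun z : Module.End F M => z m) (ρ'.commutes r)).trans
        (Module.algebraMap_end_apply _ _ _ _ _)
  | add a b ha hb iha ihb =>
    obtain ⟨f, hf, hf'⟩ := iha
    obtain ⟨g, hg, hg'⟩ := ihb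
    refine ⟨fun m => f m + g m, fun m => ?_, fun ρ' hρ' m => ?_⟩
    · obtain ⟨l, hl, e⟩ := hf m
      obtain ⟨l', hl', e'⟩ := hg m
      refine ⟨l + l', add_mem hl hl', ?_⟩
      rw [add_mul, map_add, LinearMap.add_apply, e, e', map_add, map_add]
      abel
    · change ρ' (⟨a, ha⟩ + ⟨b, hb⟩) m = f m + g m
      rw [map_add, LinearMap.add_apply, hf' ρ' hρ', hg' ρ' hρ']
  | mul a b ha hb iha ihb =>
    obtain ⟨f, hf, hf'⟩ := iha
    obtain ⟨g, hg, hg'⟩ := ihb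
    refine ⟨fun m => f (g m), fun m => ?_, fun ρ' hρ' m => ?_⟩
    · obtain ⟨l, hl, e⟩ := hg m
      obtain ⟨l', hl', e'⟩ := hf (g m)
      refine ⟨l' + ρE a l, add_mem hl' (hst a ?_ l hl), ?_⟩
      · exact parabolicJ_mono F q (fun _ hj => hj.1) ha
      · rw [mul_assoc, map_mul, Module.End.mul_apply, e, map_add, ← Module.End.mul_apply,
          ← map_mul, e', add_assoc]
    · change ρ' (⟨a, ha⟩ * ⟨b, hb⟩) m = f (g m)
      simp only [map_mul, hg' ρ' hρ', hf' ρ' hρ', Module.End.mul_apply]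

/-- The action of `H_μ` on a cell, modulo lower cells. -/
theorem exists_cell_action (hK : IsFrame ρν ρE ι K) (hx : IsRefinement μ ν xs)
    (k : Fin xs.length)
    (hst : ∀ b ∈ parabolicC F q (n := n) μ, ∀ e ∈ cellSpace K (cells μ xs k),
      ρE b e ∈ cellSpace K (cells μ xs k))
    {b : H F q n} (hb : b ∈ parabolicC F q (n := n) μ) (m : M) :
    ∃ (h : Reps (blkColour n μ) (interColour (blkColour n μ) (blkColour n ν) (xs.get k)) →
        ↥(parabolicJ F q (Jcap μ ν (xs.get k))))
      (f : Reps (blkColour n μ) (interColour (blkColour n μ) (blkColour n ν) (xs.get k)) → M),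
      b = ∑ u, Tw q u.1 * (h u : H F q n) ∧
      (∃ l ∈ cellSpace K (cells μ xs k), ρE (b * Tw q (xs.get k)) (ι m)
        = ∑ u, ρE (Tw q (u.1 * xs.get k)) (ι (f u)) + l) ∧
      ∀ ρ' : ↥(parabolicJ F q (Jcap μ ν (xs.get k))) →ₐ[F] Module.End F M,
        IsTwistedRep F q ν (xs.get k) (parabolicJ F q (Jcap μ ν (xs.get k))) ρν ρ' →
        ∀ u, ρ' (h u) m = f u := by
  obtain ⟨h, hbh, -⟩ := existsUnique_sum_Tw_Jcap q
    ((hx.mem_iff _).2 (List.get_mem xs k)) hb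
  choose f hf hf' using fun u => exists_twisted_action hK hx k hst (h u).2
  choose l hl e using fun u => hf u m
  refine ⟨h, fun u => f u m, hbh, ⟨∑ u, ρE (Tw q u.1) (l u), Submodule.sum_mem _ fun u _ =>
    hst _ (Tw_mem_parabolicC q u.2.1) _ (hl u), ?_⟩, fun ρ' hρ' u => hf' u ρ' hρ' m⟩
  rw [← Finset.sum_add_distrib]
  conv_lhs => rw [hbh, Finset.sum_mul, map_sum, LinearMap.sum_apply]
  refine Finset.sum_congr rfl fun u _ => ?_
  rw [mul_assoc, map_mul, Module.End.mul_apply, e, map_add, ← Module.End.mul_apply, ← map_mul,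
    Tw_mul q (isReducedMul_of_isMinLeft_inv (blkColour_mono μ) (hx.isMinDouble k).left u.2.1)]

theorem Tw_mul_get (q : F) (hx : IsRefinement μ ν xs) (k : Fin xs.length) {u : Perm (Fin n)}
    (hu : u ∈ young (blkColour n μ)) : Tw q (u * xs.get k) = Tw q u * Tw q (xs.get k) :=
  (Tw_mul q (isReducedMul_of_isMinLeft_inv (blkColour_mono μ) (hx.isMinDouble k).left hu)).symm

theorem isMinLeft_mul_get (hx : IsRefinement μ ν xs) (k : Fin xs.length)
    (u : Reps (blkColour n μ) (interColour (blkColour n μ) (blkColour n ν) (xs.get k))) :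
    IsMinLeft (blkColour n ν) (u.1 * xs.get k) :=
  ((hx.isMinDouble k).isMinLeft_mul_iff (blkColour_mono μ) u.2.1).2 u.2.2

theorem cellSpace_stable_of_forall (hK : IsFrame ρν ρE ι K) (hx : IsRefinement μ ν xs) {k : ℕ}
    (h : ∀ i : Fin xs.length, i.val < k → ∀ b ∈ parabolicC F q (n := n) μ, ∀ m,
      ρE (b * Tw q (xs.get i)) (ι m) ∈ cellSpace K (cells μ xs k)) :
    ∀ b ∈ parabolicC F q (n := n) μ, ∀ e ∈ cellSpace K (cells μ xs k),
      ρE b e ∈ cellSpace K (cells μ xs k) := by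
  intro b hb e he
  refine (hK.cell_induction (p := (cellSpace K (cells μ xs k)).comap (ρE b)) ?_) he
  rintro d ⟨i, hi, u, hu, rfl⟩ - m
  rw [Submodule.mem_comap, Tw_mul_get q hx i hu, ← Module.End.mul_apply, ← map_mul, ← mul_assoc]
  exact h i hi _ (mul_mem hb (Tw_mem_parabolicC q hu)) m

theorem mul_Tw_get_mem (hK : IsFrame ρν ρE ι K) (hx : IsRefinement μ ν xs) (i : Fin xs.length) :
    ∀ b ∈ parabolicC F q (n := n) μ, ∀ m,
      ρE (b * Tw q (xs.get i)) (ι m) ∈ cellSpace K (cells μ xs (i + 1)) := by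
  induction hN : i.val using Nat.strong_induction_on generalizing i with
  | _ N ih =>
  subst hN
  intro b hb m
  have hst := cellSpace_stable_of_forall hK hx (k := i) fun j hj b hb m =>
    cellSpace_mono (cells_mono μ xs hj) (ih j hj j rfl b hb m)
  obtain ⟨h, f, -, ⟨l, hl, e⟩, -⟩ := exists_cell_action hK hx i hst hb m
  rw [e]
  refine add_mem (Submodule.sum_mem _ fun u _ => ?_)
    (cellSpace_mono (cells_mono μ xs (Nat.le_succ _)) hl)
  exact hK.Tw_mem (isMinLeft_mul_get hx i u) (mul_get_mem_cells i u.2.1) _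

theorem cellSpace_stable (hK : IsFrame ρν ρE ι K) (hx : IsRefinement μ ν xs) (k : ℕ) :
    ∀ b ∈ parabolicC F q (n := n) μ, ∀ e ∈ cellSpace K (cells μ xs k),
      ρE b e ∈ cellSpace K (cells μ xs k) :=
  cellSpace_stable_of_forall hK hx fun i hi b hb m =>
    cellSpace_mono (cells_mono μ xs hi) (mul_Tw_get_mem hK hx i b hb m)

/-- The projection of the induced module onto the cell of `x_k`. -/
def cellProj (K : (LReps n ν → M) ≃ₗ[F] E) (hx : IsRefinement μ ν xs) (k : Fin xs.length) :
    E →ₗ[F]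
      (Reps (blkColour n μ) (interColour (blkColour n μ) (blkColour n ν) (xs.get k)) → M) :=
  (LinearMap.funLeft F M fun u => ⟨u.1 * xs.get k, fun _ => rfl, isMinLeft_mul_get hx k u⟩) ∘ₗ
    K.symm.toLinearMap

theorem cellProj_apply (hx : IsRefinement μ ν xs) (k : Fin xs.length) (e : E)
    (u : Reps (blkColour n μ) (interColour (blkColour n μ) (blkColour n ν) (xs.get k))) :
    cellProj K hx k e u = K.symm e ⟨u.1 * xs.get k, fun _ => rfl, isMinLeft_mul_get hx k u⟩ := rfl

open Classical in
theorem cellProj_Tw (hK : IsFrame ρν ρE ι K) (hx : IsRefinement μ ν xs) (k : Fin xs.length)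
    (u : Reps (blkColour n μ) (interColour (blkColour n μ) (blkColour n ν) (xs.get k))) (m : M) :
    cellProj K hx k (ρE (Tw q (u.1 * xs.get k)) (ι m)) = Pi.single u m := by
  ext w
  rw [cellProj_apply, ← hK.single ⟨u.1 * xs.get k, fun _ => rfl, isMinLeft_mul_get hx k u⟩ m,
    LinearEquiv.symm_apply_apply, Pi.single_apply, Pi.single_apply]
  simp only [mul_left_inj, Subtype.ext_iff]

theorem cellProj_eq_zero_iff (hx : IsRefinement μ ν xs) (k : Fin xs.length) {e : E}
    (he : e ∈ cellSpace K (cells μ xs (k + 1))) :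
    cellProj K hx k e = 0 ↔ e ∈ cellSpace K (cells μ xs k) := by
  constructor
  · intro h d hd
    by_cases hd' : d.1 ∈ cells μ xs (k + 1)
    · obtain ⟨i, hi, u, hu, hdu⟩ := hd'
      rcases (Nat.lt_succ_iff.1 hi).lt_or_eq with hik | hik
      · exact absurd ⟨i, hik, u, hu, hdu⟩ hd
      · obtain rfl : i = k := Fin.ext hik
        obtain ⟨d, hd1, hd2⟩ := d
        simp only at hdu
        subst hdu
        exact congrFun h ⟨u, hu, ((hx.isMinDouble i).isMinLeft_mul_iff (blkColour_mono μ) hu).1 hd2⟩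
    · exact he d hd'
  · intro h
    ext u
    exact h _ (hx.mul_notMem_cells k u.2.1)

end

section
variable {F : Type} [Field F] {q : F} {n : ℕ} {μ ν : List ℕ} {M E Q : Type} [AddCommGroup M]
  [Module F M] [AddCommGroup E] [Module F E] [AddCommGroup Q] [Module F Q]
  {ρν : ↥(parabolicC F q (n := n) ν) →ₐ[F] Module.End F M}
  {ρE : H F q n →ₐ[F] Module.End F E} {ι : M →ₗ[F] E}
  {K : (LReps n ν → M) ≃ₗ[F] E} {xs : List (Perm (Fin n))} {k : Fin xs.length}
  {ρ' : ↥(parabolicJ F q (Jcap μ ν (xs.get k))) →ₐ[F] Module.End F M}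
  {ρQ : ↥(parabolicC F q (n := n) μ) →ₐ[F] Module.End F Q} {ι' : M →ₗ[F] Q}
  {KQ : (Reps (blkColour n μ) (interColour (blkColour n μ) (blkColour n ν) (xs.get k)) → M)
    ≃ₗ[F] Q}

theorem coe_JcapIncl {x : Perm (Fin n)} (h : ↥(parabolicJ F q (Jcap μ ν x))) :
    (JcapIncl F q μ ν x h : H F q n) = h :=
  Subalgebra.coe_inclusion _ h

theorem exists_isFrame (hInd : IsInducedAlong F (A := H F q n)
      (B := ↥(parabolicC F q (n := n) ν)) (parabolicC F q (n := n) ν).val ρν ρE ι) :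
    ∃ K : (LReps n ν → M) ≃ₗ[F] E, IsFrame ρν ρE ι K := by
  obtain ⟨K, hK⟩ := IsInducedAlong.exists_equiv (A := H F q n)
    (B := ↥(parabolicC F q (n := n) ν)) (φ := (parabolicC F q (n := n) ν).val)
    (t := fun d : LReps n ν => Tw q d.1) (fun a => by exact existsUnique_sum_Tw_top q ν a) hInd
  exact ⟨K, hInd.1, hK⟩

theorem cellSpace_cells_zero : cellSpace K (cells μ xs 0) = ⊥ := by
  refine eq_bot_iff.2 fun e he => ?_
  rw [Submodule.mem_bot, ← map_eq_zero_iff K.symm K.symm.injective]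
  exact funext fun d => he d fun ⟨_, hi, _⟩ => absurd hi (Nat.not_lt_zero _)

theorem cellSpace_cells_length (hx : IsRefinement μ ν xs) :
    cellSpace K (cells μ xs xs.length) = ⊤ := by
  refine eq_top_iff.2 fun e _ d hd => absurd ?_ hd
  obtain ⟨i, -, h⟩ := hx.mem_cells d.2.2
  exact ⟨i, i.2, h⟩

theorem exists_equiv_of_isInducedAlong_Jcap (hx : IsRefinement μ ν xs)
    (hQ : IsInducedAlong F (A := ↥(parabolicC F q (n := n) μ))
      (B := ↥(parabolicJ F q (Jcap μ ν (xs.get k)))) (JcapIncl F q μ ν (xs.get k)) ρ' ρQ ι') :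
    ∃ KQ : (Reps (blkColour n μ) (interColour (blkColour n μ) (blkColour n ν) (xs.get k)) → M)
      ≃ₗ[F] Q, ∀ m, KQ m = ∑ u, ρQ ⟨Tw q u.1, Tw_mem_parabolicC q u.2.1⟩ (ι' (m u)) := by
  have ht (a : ↥(parabolicC F q (n := n) μ)) :
      ∃! f : Reps (blkColour n μ) (interColour (blkColour n μ) (blkColour n ν) (xs.get k)) →
        ↥(parabolicJ F q (Jcap μ ν (xs.get k))),
      a = ∑ u, ⟨Tw q u.1, Tw_mem_parabolicC q u.2.1⟩ * JcapIncl F q μ ν (xs.get k) (f u) := by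
    have := existsUnique_sum_Tw_Jcap q ((hx.mem_iff _).2 (List.get_mem xs k)) a.2
    simpa only [Subtype.ext_iff, AddSubmonoidClass.coe_finsetSum, MulMemClass.coe_mul,
      coe_JcapIncl] using this
  exact IsInducedAlong.exists_equiv (A := ↥(parabolicC F q (n := n) μ))
    (B := ↥(parabolicJ F q (Jcap μ ν (xs.get k)))) ht hQ

/-- The projection onto the `k`th cell intertwines the actions of `H_μ` on the generators. -/
theorem cellProj_mul_Tw_get (hK : IsFrame ρν ρE ι K) (hx : IsRefinement μ ν xs)
    (hρ' : IsTwistedRep F q ν (xs.get k) (parabolicJ F q (Jcap μ ν (xs.get k))) ρν ρ')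
    (hι' : ∀ h m, ι' (ρ' h m) = ρQ (JcapIncl F q μ ν (xs.get k) h) (ι' m))
    (hKQ : ∀ m, KQ m = ∑ u, ρQ ⟨Tw q u.1, Tw_mem_parabolicC q u.2.1⟩ (ι' (m u)))
    (b : ↥(parabolicC F q (n := n) μ)) (m : M) :
    KQ (cellProj K hx k (ρE (b * Tw q (xs.get k)) (ι m))) = ρQ b (ι' m) := by
  classical
  obtain ⟨h, f, hb, ⟨l, hl, e⟩, hf⟩ := exists_cell_action hK hx k (cellSpace_stable hK hx k) b.2 m
  have hl' := (cellProj_eq_zero_iff hx k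
    (cellSpace_mono (cells_mono μ xs (Nat.le_succ _)) hl)).2 hl
  have hb' : b = ∑ u, ⟨Tw q u.1, Tw_mem_parabolicC q u.2.1⟩ * JcapIncl F q μ ν (xs.get k) (h u) := by
    simpa only [Subtype.ext_iff, AddSubmonoidClass.coe_finsetSum, MulMemClass.coe_mul,
      coe_JcapIncl] using hb
  have hs : cellProj K hx k (ρE (b * Tw q (xs.get k)) (ι m)) = f := by
    rw [e, map_add, hl', add_zero, map_sum]
    simp only [cellProj_Tw hK hx k]
    exact Finset.univ_sum_single f
  rw [hs, hKQ]
  conv_rhs => rw [hb', map_sum, LinearMap.sum_apply]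
  refine Finset.sum_congr rfl fun u _ => ?_
  rw [map_mul, Module.End.mul_apply, ← hι', hf ρ' hρ']

theorem cellProj_equivariant (hK : IsFrame ρν ρE ι K) (hx : IsRefinement μ ν xs)
    (hρ' : IsTwistedRep F q ν (xs.get k) (parabolicJ F q (Jcap μ ν (xs.get k))) ρν ρ')
    (hι' : ∀ h m, ι' (ρ' h m) = ρQ (JcapIncl F q μ ν (xs.get k) h) (ι' m))
    (hKQ : ∀ m, KQ m = ∑ u, ρQ ⟨Tw q u.1, Tw_mem_parabolicC q u.2.1⟩ (ι' (m u)))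
    (b : ↥(parabolicC F q (n := n) μ)) {e : E} (he : e ∈ cellSpace K (cells μ xs (k + 1))) :
    KQ (cellProj K hx k (ρE b e)) = ρQ b (KQ (cellProj K hx k e)) := by
  refine hK.cell_induction (p := LinearMap.eqLocus
    (KQ.toLinearMap ∘ₗ cellProj K hx k ∘ₗ ρE b)
    (ρQ b ∘ₗ KQ.toLinearMap ∘ₗ cellProj K hx k)) ?_ he
  rintro d ⟨i, hi, u, hu, rfl⟩ hd m
  change KQ (cellProj K hx k (ρE b _)) = ρQ b (KQ (cellProj K hx k _))
  rcases (Nat.lt_succ_iff.1 hi).lt_or_eq with hik | hik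
  · have h1 := hK.Tw_mem hd (S := cells μ xs k) ⟨i, hik, u, hu, rfl⟩ m
    have h2 := cellSpace_stable hK hx k b b.2 _ h1
    have hle := cellSpace_mono (K := K) (cells_mono μ xs (Nat.le_succ k.val))
    rw [(cellProj_eq_zero_iff hx k (hle h1)).2 h1, (cellProj_eq_zero_iff hx k (hle h2)).2 h2,
      map_zero, map_zero]
  · obtain rfl : i = k := Fin.ext hik
    have hu' := Tw_mem_parabolicC q hu
    rw [Tw_mul_get q hx i hu]
    have h1 := cellProj_mul_Tw_get hK hx hρ' hι' hKQ ⟨Tw q u, hu'⟩ m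
    have h2 := cellProj_mul_Tw_get hK hx hρ' hι' hKQ (b * ⟨Tw q u, hu'⟩) m
    rw [h1, ← Module.End.mul_apply, ← map_mul, ← mul_assoc]
    exact h2.trans (by rw [map_mul, Module.End.mul_apply])

theorem cellProj_surjOn (hK : IsFrame ρν ρE ι K) (hx : IsRefinement μ ν xs) (k : Fin xs.length)
    (m : Reps (blkColour n μ) (interColour (blkColour n μ) (blkColour n ν) (xs.get k)) → M) :
    ∃ e ∈ cellSpace K (cells μ xs (k + 1)), cellProj K hx k e = m := by
  classical
  refine ⟨∑ u, ρE (Tw q (u.1 * xs.get k)) (ι (m u)), Submodule.sum_mem _ fun u _ =>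
    hK.Tw_mem (isMinLeft_mul_get hx k u) (mul_get_mem_cells k u.2.1) _, ?_⟩
  rw [map_sum]
  simp only [cellProj_Tw hK hx k]
  exact Finset.univ_sum_single m

end

end Mackey

/-- **Mackey theorem for affine Hecke–Clifford superalgebras** (Theorem `TMackey`
of Brundan–Kleshchev): for compositions `μ, ν` of `n` and an `H_ν`-module `M`, the
restriction `res^n_μ ind^n_ν M` admits a filtration by `H_μ`-submodules whose
successive subquotients are (evenly) isomorphic to
`ind^μ_{μ∩xν} (ˣ(res^ν_{x⁻¹μ∩ν} M))`, one for each minimal double coset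
representative `x ∈ D_{μ,ν}`, and the subquotients can be taken in any order
refining the Bruhat order on `D_{μ,ν}` (in particular, for `x = 1`,
`ind^μ_{μ∩ν} res^ν_{μ∩ν} M` appears as a submodule). -/
theorem mackey_theorem
    (F : Type) [Field F] [IsAlgClosed F] (h2 : (2 : F) ≠ 0)
    (q : F) (hq : GoodParam F q) (n : ℕ)
    (μ ν : List ℕ) (hμ : IsComposition μ n) (hν : IsComposition ν n)
    (M : Type) [AddCommGroup M] [Module F M]
    (ρν : ↥(parabolicC F q (n := n) ν) →ₐ[F] Module.End F M)
    (E : Type) [AddCommGroup E] [Module F E]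
    (ρE : H F q n →ₐ[F] Module.End F E) (ι : M →ₗ[F] E)
    (hInd : IsInducedAlong F (A := H F q n) (B := ↥(parabolicC F q (n := n) ν))
      (parabolicC F q (n := n) ν).val ρν ρE ι)
    -- an enumeration of the minimal double coset representatives in an order
    -- refining the Bruhat order
    (xs : List (Equiv.Perm (Fin n))) (hnd : xs.Nodup)
    (hxs : ∀ x : Equiv.Perm (Fin n), IsMinDC μ ν x ↔ x ∈ xs)
    (hord : ∀ i j : Fin xs.length, BruhatLE (xs.get i) (xs.get j) →
      xs.get i ≠ xs.get j → (i : ℕ) < (j : ℕ)) :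
    ∃ V : ℕ → Submodule F E,
      V 0 = ⊥ ∧ V xs.length = ⊤ ∧ (∀ k : ℕ, V k ≤ V (k + 1)) ∧
      (∀ (k : ℕ) (b : ↥(parabolicC F q (n := n) μ)) (e : E),
        e ∈ V k → ρE (b : H F q n) e ∈ V k) ∧
      ∀ (k : Fin xs.length)
        (ρ' : ↥(parabolicJ F q (Jcap μ ν (xs.get k))) →ₐ[F] Module.End F M),
        IsTwistedRep F q ν (xs.get k) (parabolicJ F q (Jcap μ ν (xs.get k))) ρν ρ' →
        ∀ (Q : Type) [AddCommGroup Q] [Module F Q],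
        ∀ (ρQ : ↥(parabolicC F q (n := n) μ) →ₐ[F] Module.End F Q) (ι' : M →ₗ[F] Q),
          IsInducedAlong F (A := ↥(parabolicC F q (n := n) μ))
            (B := ↥(parabolicJ F q (Jcap μ ν (xs.get k))))
            (JcapIncl F q μ ν (xs.get k)) ρ' ρQ ι' →
          ∃ π : ↥(V ((k : ℕ) + 1)) →ₗ[F] Q, Function.Surjective π ∧
            (∀ e : ↥(V ((k : ℕ) + 1)), π e = 0 ↔ (e : E) ∈ V (k : ℕ)) ∧
            ∀ (b : ↥(parabolicC F q (n := n) μ)) (e e' : ↥(V ((k : ℕ) + 1))),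
              (e' : E) = ρE (b : H F q n) (e : E) → π e' = ρQ b (π e) := by
  have hx : IsRefinement μ ν xs := ⟨hnd, hxs, hord⟩
  obtain ⟨K, hK⟩ := exists_isFrame hInd
  refine ⟨fun k => cellSpace K (cells μ xs k), cellSpace_cells_zero, cellSpace_cells_length hx,
    fun k => cellSpace_mono (cells_mono μ xs (Nat.le_succ k)),
    fun k b e he => cellSpace_stable hK hx k b b.2 e he, ?_⟩
  intro k ρ' hρ' Q _ _ ρQ ι' hQ
  obtain ⟨KQ, hKQ⟩ := exists_equiv_of_isInducedAlong_Jcap hx hQ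
  refine ⟨KQ.toLinearMap ∘ₗ cellProj K hx k ∘ₗ Submodule.subtype _, fun y => ?_, fun e => ?_,
    fun b e e' h => ?_⟩
  · obtain ⟨e, he, h⟩ := cellProj_surjOn hK hx k (KQ.symm y)
    exact ⟨⟨e, he⟩, (congrArg KQ h).trans (KQ.apply_symm_apply y)⟩
  · rw [← cellProj_eq_zero_iff hx k e.2]
    exact map_eq_zero_iff KQ KQ.injective
  · change KQ (cellProj K hx k e') = ρQ b (KQ (cellProj K hx k e))
    rw [h]
    exact cellProj_equivariant hK hx hρ' hQ.1 hKQ b e.2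

end HC
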